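/- Let n ≥ 1, let M be a model of PA⁻ + IΣn, and let N be a Σ_{n+1}-elementary cofinal extension of M. Then M satisfies PΣn if and only if N satisfies PΣn. -/

import Mathlib

/- Shared development: first-order arithmetic in the language {0,1,+,·,<},
   the arithmetic hierarchy, fragments of arithmetic, and coded finite
   combinatorics inside models. -/

open FirstOrder Language

namespace ArithFC

/-- Function symbols of the language of arithmetic: 0, 1, +, ·. -/
inductive Func : ℕ → Type
  | zero : Func 0
  | one : Func 0
  | add : Func 2
  | mul : Func 2

/-- Relation symbols of the language of arithmetic: <. -/
inductive Rel : ℕ → Type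
  | lt : Rel 2

/-- The first-order language {0, 1, +, ·, <}. -/
def lang : Language :=
  { Functions := Func, Relations := Rel }

section Instances

variable (M : Type) [lang.Structure M]

instance : Zero M := ⟨Structure.funMap (L := lang) Func.zero ![]⟩
instance : One M := ⟨Structure.funMap (L := lang) Func.one ![]⟩
instance : Add M := ⟨fun x y => Structure.funMap (L := lang) Func.add ![x, y]⟩
instance : Mul M := ⟨fun x y => Structure.funMap (L := lang) Func.mul ![x, y]⟩
instance : LT M := ⟨fun x y => Structure.RelMap (L := lang) Rel.lt ![x, y]⟩
instance : LE M := ⟨fun x y => x < y ∨ x = y⟩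

end Instances

/-- The numeral `n` in a model. -/
def numM (M : Type) [lang.Structure M] : ℕ → M
  | 0 => 0
  | n + 1 => numM M n + 1

/-- `b` is nonstandard (greater than every numeral). -/
def Nonstd {M : Type} [lang.Structure M] (b : M) : Prop := ∀ n : ℕ, numM M n < b

/-- The atomic formula `t < u`. -/
def ltFm {α : Type} {n : ℕ} (t u : lang.Term (α ⊕ Fin n)) : lang.BoundedFormula α n :=
  BoundedFormula.rel (Rel.lt : lang.Relations 2) ![t, u]

/-- Δ₀ formulas: built from atomic formulas by boolean connectives and
bounded universal quantification (this generates, up to logical equivalence,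
the usual class of bounded formulas). -/
inductive IsDelta0 {α : Type} : ∀ n : ℕ, lang.BoundedFormula α n → Prop
  | falsum (n : ℕ) : IsDelta0 n BoundedFormula.falsum
  | equal (n : ℕ) (t u : lang.Term (α ⊕ Fin n)) : IsDelta0 n (BoundedFormula.equal t u)
  | rel (n l : ℕ) (R : lang.Relations l) (ts : Fin l → lang.Term (α ⊕ Fin n)) :
      IsDelta0 n (BoundedFormula.rel R ts)
  | imp (n : ℕ) {φ ψ : lang.BoundedFormula α n} :
      IsDelta0 n φ → IsDelta0 n ψ → IsDelta0 n (φ.imp ψ)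
  | bdAll (n : ℕ) (t : lang.Term (α ⊕ Fin n)) {φ : lang.BoundedFormula α (n + 1)} :
      IsDelta0 (n + 1) φ →
      IsDelta0 n
        (BoundedFormula.all ((ltFm (Term.var (Sum.inr (Fin.last n))) (t.liftAt 1 n)).imp φ))

mutual
  /-- Σ_m formulas. -/
  inductive SigmaFm {α : Type} : ℕ → ∀ n : ℕ, lang.BoundedFormula α n → Prop
    | delta0 (m n : ℕ) {φ : lang.BoundedFormula α n} : IsDelta0 n φ → SigmaFm m n φ
    | ofPi (m n : ℕ) {φ : lang.BoundedFormula α n} : PiFm m n φ → SigmaFm (m + 1) n φ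
    | ex (m n : ℕ) {φ : lang.BoundedFormula α (n + 1)} :
        SigmaFm (m + 1) (n + 1) φ → SigmaFm (m + 1) n φ.ex
  /-- Π_m formulas. -/
  inductive PiFm {α : Type} : ℕ → ∀ n : ℕ, lang.BoundedFormula α n → Prop
    | delta0 (m n : ℕ) {φ : lang.BoundedFormula α n} : IsDelta0 n φ → PiFm m n φ
    | ofSigma (m n : ℕ) {φ : lang.BoundedFormula α n} : SigmaFm m n φ → PiFm (m + 1) n φ
    | all (m n : ℕ) {φ : lang.BoundedFormula α (n + 1)} :
        PiFm (m + 1) (n + 1) φ → PiFm (m + 1) n φ.all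
end

/-- A `k`-ary relation on `M` is Σ_m-definable (with parameters from `M`). -/
def IsSigmaDef (m : ℕ) (M : Type) [lang.Structure M] {k : ℕ} (R : (Fin k → M) → Prop) : Prop :=
  ∃ (p : ℕ) (φ : lang.BoundedFormula (Fin k ⊕ Fin p) 0) (w : Fin p → M),
    SigmaFm m 0 φ ∧ ∀ v : Fin k → M, R v ↔ φ.Realize (Sum.elim v w) finZeroElim

/-- A subset of `M` is Σ_m-definable with parameters. -/
def SigmaDef1 (m : ℕ) (M : Type) [lang.Structure M] (A : Set M) : Prop :=
  IsSigmaDef m M (k := 1) fun v => v 0 ∈ A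

/-- A binary relation on `M` is Σ_m-definable with parameters. -/
def SigmaDef2 (m : ℕ) (M : Type) [lang.Structure M] (R : M → M → Prop) : Prop :=
  IsSigmaDef m M (k := 2) fun v => R (v 0) (v 1)

/-- A ternary relation on `M` is Σ_m-definable with parameters. -/
def SigmaDef3 (m : ℕ) (M : Type) [lang.Structure M] (R : M → M → M → Prop) : Prop :=
  IsSigmaDef m M (k := 3) fun v => R (v 0) (v 1) (v 2)

/-- `M` is a model of PA⁻ (the nonnegative part of a discretely ordered
commutative semiring). -/
structure PAm (M : Type) [lang.Structure M] : Prop where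
  add_assoc : ∀ x y z : M, x + y + z = x + (y + z)
  add_comm : ∀ x y : M, x + y = y + x
  mul_assoc : ∀ x y z : M, x * y * z = x * (y * z)
  mul_comm : ∀ x y : M, x * y = y * x
  ldistrib : ∀ x y z : M, x * (y + z) = x * y + x * z
  add_zero : ∀ x : M, x + 0 = x
  mul_zero : ∀ x : M, x * 0 = 0
  mul_one : ∀ x : M, x * 1 = x
  lt_trans : ∀ x y z : M, x < y → y < z → x < z
  lt_irrefl : ∀ x : M, ¬x < x
  lt_total : ∀ x y : M, x < y ∨ x = y ∨ y < x
  add_lt_add : ∀ x y z : M, x < y → x + z < y + z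
  mul_lt_mul : ∀ x y z : M, x < y → 0 < z → x * z < y * z
  sub_exists : ∀ x y : M, x < y → ∃ z, x + z = y
  zero_lt_one : (0 : M) < 1
  discrete : ∀ x : M, 0 < x → (1 : M) ≤ x
  zero_le : ∀ x : M, (0 : M) ≤ x

/-- `M` satisfies the Σ_m-induction scheme (with parameters). -/
def ISig (m : ℕ) (M : Type) [lang.Structure M] : Prop :=
  ∀ A : Set M, SigmaDef1 m M A → (0 : M) ∈ A → (∀ x, x ∈ A → x + 1 ∈ A) → ∀ x, x ∈ A

/-- `M` satisfies the Σ_m-collection (bounding) scheme (with parameters). -/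
def BSig (m : ℕ) (M : Type) [lang.Structure M] : Prop :=
  ∀ R : M → M → Prop, SigmaDef2 m M R → ∀ a : M,
    (∀ x, x < a → ∃ y, R x y) → ∃ b, ∀ x, x < a → ∃ y, y < b ∧ R x y

section Coding

variable {M : Type} [lang.Structure M]

/-- `z` is the Cantor pair `⟨x, y⟩`: `2z = (x+y)(x+y+1) + 2y`. -/
def IsPairC (z x y : M) : Prop := z + z = (x + y) * (x + y + 1) + (y + y)

/-- Gödel's β-function: `x = a mod ((i+1)·b + 1)`. -/
def BetaC (a b i x : M) : Prop :=
  x < (i + 1) * b + 1 ∧ ∃ q, a = q * ((i + 1) * b + 1) + x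

/-- The sequence coded by `s` (via a Cantor pair of β-function data) has value `x`
at place `i`. -/
def SeqAt (s i x : M) : Prop := ∃ a b, IsPairC s a b ∧ BetaC a b i x

/-- `c` codes the M-finite set `X` of cardinality `card`: `c = ⟨card, s⟩` where `s`
codes the strictly increasing enumeration of `X` of length `card`. -/
def CodesFinset (c : M) (X : Set M) (card : M) : Prop :=
  ∃ s, IsPairC c card s ∧
    (∀ i, i < card → ∃ x, x ∈ X ∧ SeqAt s i x) ∧
    (∀ i j x y, i < j → j < card → SeqAt s i x → SeqAt s j y → x < y) ∧
    (∀ x, x ∈ X ↔ ∃ i, i < card ∧ SeqAt s i x)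

/-- `X` is an M-finite (coded) set. -/
def MFinite (X : Set M) : Prop := ∃ c card : M, CodesFinset c X card

/-- `d` codes an `e`-element subset `D` of `[0, y)`, i.e. an element of `[y]^e`. -/
def CodesTupleIn (d e y : M) (D : Set M) : Prop :=
  CodesFinset d D e ∧ ∀ z ∈ D, z < y

/-- `f` codes a (finite) function defined on all of `[0, a)`. -/
def CodesFunOn (f a : M) : Prop :=
  ∀ x, x < a → (∃ y, SeqAt f x y) ∧ ∀ y y', SeqAt f x y → SeqAt f x y' → y = y'

/-- `X` is an M-coded subset of `[0, a)`. -/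
def MCodedSubset (a : M) (X : Set M) : Prop :=
  MFinite X ∧ ∀ x ∈ X, x < a

end Coding

/-- An `M`-ultrafilter on `a`: an ultrafilter of the Boolean algebra of
M-finite subsets of `[0, a)`. -/
structure MUltra (M : Type) [lang.Structure M] (a : M) where
  sets : Set (Set M)
  mem_coded : ∀ X ∈ sets, MCodedSubset a X
  univ_mem : {x : M | x < a} ∈ sets
  superset_mem : ∀ X Y : Set M, X ∈ sets → MCodedSubset a Y → X ⊆ Y → Y ∈ sets
  inter_mem : ∀ X Y : Set M, X ∈ sets → Y ∈ sets → X ∩ Y ∈ sets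
  empty_not_mem : (∅ : Set M) ∉ sets
  ultra : ∀ X : Set M, MCodedSubset a X → X ∈ sets ∨ {x : M | x < a ∧ x ∉ X} ∈ sets

section Principles

variable (M : Type) [lang.Structure M]

/-- `F` is (the graph of) a Σ_m-definable injection from `[0, y)` into `[0, x)`. -/
def SigmaInjRel (m : ℕ) (F : M → M → Prop) (y x : M) : Prop :=
  SigmaDef2 m M F ∧
    (∀ u, u < y → ∃ v, v < x ∧ F u v) ∧
    (∀ u v v', u < y → F u v → F u v' → v = v') ∧
    (∀ u u' v, u < y → u' < y → F u v → F u' v → u = u')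

/-- There exists a Σ_m-definable injection from `[0, y)` into `[0, x)`. -/
def ExSigmaInj (m : ℕ) (y x : M) : Prop := ∃ F : M → M → Prop, SigmaInjRel M m F y x

/-- There exists a Σ_m-definable injection from all of `M` into `[0, a)`. -/
def SigmaInjWhole (m : ℕ) (a : M) : Prop :=
  ∃ F : M → M → Prop, SigmaDef2 m M F ∧
    (∀ u, ∃ v, v < a ∧ F u v) ∧
    (∀ u v v', F u v → F u v' → v = v') ∧
    (∀ u u' v, F u v → F u' v → u = u')

/-- CARD(Σ_m): no Σ_m-definable multivalued map sends `M` injectively below `a`. -/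
def CARD (m : ℕ) : Prop :=
  ∀ F : M → M → Prop, SigmaDef2 m M F → ∀ a : M,
    (∀ x, ∃ y, y < a ∧ F x y) →
      ∃ x0 x1 y, x0 ≠ x1 ∧ y < a ∧ F x0 y ∧ F x1 y

/-- GPHP(Σ_m): for every `x` there is `y` with no Σ_m-definable injection of
`[0,y)` into `[0,x)`. -/
def GPHP (m : ℕ) : Prop := ∀ x : M, ∃ y : M, ¬ExSigmaInj M m y x

/-- WPHP(Σ_m): for `x > 0` there is no Σ_m-definable injection of `[0,2x)` into `[0,x)`. -/
def WPHP (m : ℕ) : Prop := ∀ x : M, 0 < x → ¬ExSigmaInj M m (x + x) x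

/-- `C` is a Σ_m-definable `k`-coloring of `[y]^e` (acting on codes of
`e`-element subsets of `[0,y)`, independently of the chosen code). -/
def IsColoring (m : ℕ) (e y k : M) (C : M → M → Prop) : Prop :=
  SigmaDef2 m M C ∧
    (∀ d D, CodesTupleIn d e y D → ∃ i, i < k ∧ C d i) ∧
    (∀ d d' D i i', CodesTupleIn d e y D → CodesTupleIn d' e y D → C d i → C d' i' → i = i')

/-- FRT^e_k(Σ_m): every Σ_m-definable `k`-coloring of some `[y]^e` has an
M-finite homogeneous set of cardinality `x`, for every `x`. -/
def FRT (m : ℕ) (e k : M) : Prop :=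
  ∀ x : M, ∃ y : M, ∀ C : M → M → Prop, IsColoring M m e y k C →
    ∃ (c : M) (H : Set M), CodesFinset c H x ∧ (∀ z ∈ H, z < y) ∧
      ∃ i, ∀ d D, CodesFinset d D e → D ⊆ H → C d i

/-- fairFRT^e_k(Σ_m): the homogeneous set is required to be given as the range of a
Σ_m-definable injection from `[0,x)` into `[0,y)`. -/
def FairFRT (m : ℕ) (e k : M) : Prop :=
  ∀ x : M, ∃ y : M, ∀ C : M → M → Prop, IsColoring M m e y k C →
    ∃ H : M → M → Prop, SigmaInjRel M m H x y ∧
      ∃ i, ∀ d D, CodesFinset d D e → (∀ z ∈ D, ∃ u, u < x ∧ H u z) → C d i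

/-- `C` is a Σ_m-definable `k`-coloring of `[0, y)`. -/
def IsColoring1 (m : ℕ) (y k : M) (C : M → M → Prop) : Prop :=
  SigmaDef2 m M C ∧
    (∀ z, z < y → ∃ i, i < k ∧ C z i) ∧
    (∀ z i i', z < y → C z i → C z i' → i = i')

/-- FRT¹_k(Σ_m): every Σ_m-definable `k`-coloring of some `[0,y)` has an M-finite
homogeneous set of cardinality `x`, for every `x`. -/
def FRT1 (m : ℕ) (k : M) : Prop :=
  ∀ x : M, ∃ y : M, ∀ C : M → M → Prop, IsColoring1 M m y k C →
    ∃ (c : M) (H : Set M), CodesFinset c H x ∧ (∀ z ∈ H, z < y) ∧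
      ∃ i, ∀ z ∈ H, C z i

/-- fairFRT¹_k(Σ_m). -/
def FairFRT1 (m : ℕ) (k : M) : Prop :=
  ∀ x : M, ∃ y : M, ∀ C : M → M → Prop, IsColoring1 M m y k C →
    ∃ H : M → M → Prop, SigmaInjRel M m H x y ∧
      ∃ i, ∀ u v, u < x → H u v → C v i

end Principles

section Approx

variable {M : Type} [lang.Structure M]

/-- `f` is (the graph of) a partial function. -/
def IsPartialFun (f : M → M → Prop) : Prop := ∀ x y y', f x y → f x y' → y = y'

/-- `s` codes an approximation to the partial function `f` of length `b`. -/
def IsApprox (f : M → M → Prop) (s b : M) : Prop :=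
  (∀ i, i < b → ∃ v, SeqAt s i v) ∧
    (∀ i u v x y, i + 1 < b → SeqAt s i u → SeqAt s (i + 1) v → x ≤ u → f x y → y ≤ v)

/-- `s` codes a `g`-stretched approximation to the partial function `f` of length `b`. -/
def IsStretchedApprox (f g : M → M → Prop) (s b : M) : Prop :=
  (∀ i, i < b → ∃ v, SeqAt s i v) ∧
    (∀ i u w v x y, i + 1 < b → SeqAt s i u → g u w → SeqAt s (i + 1) v →
      x ≤ w → f x y → y ≤ v)

/-- The eventual (limit) value of `fun s => h s ·` is `x`. -/
def EvLim (h : M → M → Prop) (x : M) : Prop := ∃ s : M, ∀ t, s < t → h t x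

end Approx

/-- PΣ_m: every partial Σ_m-definable function admits approximations of every length. -/
def PSig (m : ℕ) (M : Type) [lang.Structure M] : Prop :=
  ∀ f : M → M → Prop, SigmaDef2 m M f → IsPartialFun f → ∀ b : M, ∃ s, IsApprox f s b

section Extensions

variable (M N : Type) [lang.Structure M] [lang.Structure N]

/-- `g : M → N` is Σ_m-elementary: Σ_m formulas with parameters from `M` transfer. -/
def SigmaElem (m : ℕ) (g : M → N) : Prop :=
  ∀ (p : ℕ) (φ : lang.BoundedFormula (Fin p) 0), SigmaFm m 0 φ →
    ∀ v : Fin p → M, (φ.Realize v finZeroElim ↔ φ.Realize (g ∘ v) finZeroElim)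

/-- The extension `g : M → N` is cofinal. -/
def Cofinal (g : M → N) : Prop := ∀ z : N, ∃ x : M, z ≤ g x

/-- `[0,a]^M = [0,a]^N`: every element of `N` below `g a` comes from `M`. -/
def SameBelow (g : M → N) (a : M) : Prop := ∀ z : N, z ≤ g a → ∃ x : M, g x = z

end Extensions

section Ramsey

variable {M : Type} [lang.Structure M]

/-- `f` is an M-coded `k`-coloring of `[y]^e` (assigning colors to codes of
`e`-subsets of `[0,y)`, independently of the code). -/
def CodedColoring (f e y k : M) : Prop :=
  (∀ d D, CodesTupleIn d e y D → ∃ i, i < k ∧ SeqAt f d i) ∧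
    (∀ d d' D i i', CodesTupleIn d e y D → CodesTupleIn d' e y D →
      SeqAt f d i → SeqAt f d' i' → i = i')

/-- The coded coloring `f` of `[y]^e` has an M-coded homogeneous set of cardinality `x`. -/
def CodedHomog (f e y x : M) : Prop :=
  ∃ (c : M) (H : Set M), CodesFinset c H x ∧ (∀ z ∈ H, z < y) ∧
    ∃ i, ∀ d D, CodesFinset d D e → D ⊆ H → SeqAt f d i

/-- `y = r(x, e, k)`: `y` is the least size guaranteeing coded homogeneous sets of
cardinality `x` for all coded `k`-colorings of `e`-subsets. -/
def IsRamsey (x e k y : M) : Prop :=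
  (∀ f, CodedColoring f e y k → CodedHomog f e y x) ∧
    (∀ y', y' < y → ∃ f, CodedColoring f e y' k ∧ ¬CodedHomog f e y' x)

/-- `y = r^(b)(x, e, k)`: the `b`-th iterate of the Ramsey function inside `M`. -/
def IterRamsey (x e k b y : M) : Prop :=
  ∃ s : M, SeqAt s 0 x ∧ SeqAt s b y ∧ (∀ i, i ≤ b → ∃ u, SeqAt s i u) ∧
    (∀ i u v, i < b → SeqAt s i u → SeqAt s (i + 1) v → IsRamsey u e k v)

end Ramsey

end ArithFC

open FirstOrder Language
namespace ArithFC

/-! ### Formulas: substitution and closure properties -/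

section Syn

/-- Lifting of a term under one more bound variable. -/
def liftT {β : Type} {n : ℕ} (t : lang.Term (β ⊕ Fin n)) : lang.Term (β ⊕ Fin (n + 1)) :=
  t.relabel (Sum.map id Fin.castSucc)

theorem liftT_realize {β : Type} {n : ℕ} (t : lang.Term (β ⊕ Fin n)) {X : Type}
    [lang.Structure X] (v : β → X) (xs : Fin n → X) (x : X) :
    (liftT t).realize (Sum.elim v (Fin.snoc xs x : Fin (n + 1) → X)) =
      t.realize (Sum.elim v xs) := by
  unfold liftT
  rw [Term.realize_relabel]
  congr 1
  funext a
  rcases a with a | i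
  · rfl
  · simp [Fin.snoc_castSucc]

theorem liftAt_realize {β : Type} {n : ℕ} (t : lang.Term (β ⊕ Fin n)) {X : Type}
    [lang.Structure X] (v : β → X) (xs : Fin n → X) (x : X) :
    (t.liftAt 1 n).realize (Sum.elim v (Fin.snoc xs x : Fin (n + 1) → X)) =
      t.realize (Sum.elim v xs) := by
  rw [Term.realize_liftAt]
  congr 1
  funext a
  rcases a with a | i
  · rfl
  · have : (Fin.castAdd 1 i) = i.castSucc := rfl
    simp [this, Fin.snoc_castSucc]

def extS {α β : Type} {n n' : ℕ} (σ : α ⊕ Fin n → lang.Term (β ⊕ Fin n')) :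
    α ⊕ Fin (n + 1) → lang.Term (β ⊕ Fin (n' + 1)) :=
  Sum.elim (fun a => liftT (σ (Sum.inl a)))
    (Fin.snoc (α := fun _ => lang.Term (β ⊕ Fin (n' + 1))) (fun i => liftT (σ (Sum.inr i)))
      (Term.var (Sum.inr (Fin.last n'))))

/-- Evaluation of a substitution. -/
def evL {α β : Type} {n n' : ℕ} (σ : α ⊕ Fin n → lang.Term (β ⊕ Fin n')) {X : Type}
    [lang.Structure X] (v : β → X) (xs : Fin n' → X) : α → X :=
  fun a => (σ (Sum.inl a)).realize (Sum.elim v xs)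

def evR {α β : Type} {n n' : ℕ} (σ : α ⊕ Fin n → lang.Term (β ⊕ Fin n')) {X : Type}
    [lang.Structure X] (v : β → X) (xs : Fin n' → X) : Fin n → X :=
  fun a => (σ (Sum.inr a)).realize (Sum.elim v xs)

theorem evL_ext {α β : Type} {n n' : ℕ} (σ : α ⊕ Fin n → lang.Term (β ⊕ Fin n')) {X : Type}
    [lang.Structure X] (v : β → X) (xs : Fin n' → X) (x : X) :
    evL (extS σ) v (Fin.snoc xs x : Fin (n' + 1) → X) = evL σ v xs := by
  funext a
  simp [evL, extS, liftT_realize]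

theorem evR_ext {α β : Type} {n n' : ℕ} (σ : α ⊕ Fin n → lang.Term (β ⊕ Fin n')) {X : Type}
    [lang.Structure X] (v : β → X) (xs : Fin n' → X) (x : X) :
    evR (extS σ) v (Fin.snoc xs x : Fin (n' + 1) → X) = Fin.snoc (evR σ v xs) x := by
  funext a
  refine Fin.lastCases ?_ (fun i => ?_) a
  · simp [evR, extS]
  · simp [evR, extS, liftT_realize]

theorem subst_eval {α β : Type} {n n' : ℕ} (σ : α ⊕ Fin n → lang.Term (β ⊕ Fin n'))
    (t : lang.Term (α ⊕ Fin n)) {X : Type}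
    [lang.Structure X] (v : β → X) (xs : Fin n' → X) :
    (t.subst σ).realize (Sum.elim v xs) = t.realize (Sum.elim (evL σ v xs) (evR σ v xs)) := by
  rw [Term.realize_subst]
  congr 1
  funext a
  rcases a with a | a <;> rfl

theorem ltFm_realize {α : Type} {n : ℕ} (t u : lang.Term (α ⊕ Fin n)) {X : Type}
    [lang.Structure X] (v : α → X) (xs : Fin n → X) :
    (ltFm t u).Realize v xs ↔ t.realize (Sum.elim v xs) < u.realize (Sum.elim v xs) := by
  show Structure.RelMap _ _ ↔ Structure.RelMap _ _
  apply iff_of_eq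
  congr 1
  funext i
  refine Fin.cases rfl (fun i => ?_) i
  refine Fin.cases rfl (fun i => i.elim0) i

theorem delta_subst {α β : Type} {n : ℕ} {φ : lang.BoundedFormula α n} (h : IsDelta0 n φ) :
    ∀ (n' : ℕ) (σ : α ⊕ Fin n → lang.Term (β ⊕ Fin n')),
      ∃ ψ : lang.BoundedFormula β n', IsDelta0 n' ψ ∧
        ∀ (X : Type) [lang.Structure X] (v : β → X) (xs : Fin n' → X),
          ψ.Realize v xs ↔ φ.Realize (evL σ v xs) (evR σ v xs) := by
  induction h with
  | falsum n => exact fun n' σ => ⟨_, IsDelta0.falsum n', fun X _ v xs => Iff.rfl⟩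
  | equal n t u =>
    intro n' σ
    refine ⟨_, IsDelta0.equal n' (t.subst σ) (u.subst σ), fun X _ v xs => ?_⟩
    show _ = _ ↔ _ = _
    rw [subst_eval, subst_eval]
  | rel n l R ts =>
    intro n' σ
    refine ⟨_, IsDelta0.rel n' l R (fun i => (ts i).subst σ), fun X _ v xs => ?_⟩
    show Structure.RelMap _ _ ↔ Structure.RelMap _ _
    simp only [subst_eval]
  | imp n _ _ ih1 ih2 =>
    intro n' σ
    obtain ⟨ψ1, h1, e1⟩ := ih1 n' σ
    obtain ⟨ψ2, h2, e2⟩ := ih2 n' σ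
    refine ⟨_, IsDelta0.imp n' h1 h2, fun X _ v xs => ?_⟩
    rw [BoundedFormula.realize_imp, BoundedFormula.realize_imp, e1, e2]
  | bdAll n t _ ih =>
    intro n' σ
    obtain ⟨ψ, h, e⟩ := ih (n' + 1) (extS σ)
    refine ⟨_, IsDelta0.bdAll n' (t.subst σ) h, fun X _ v xs => ?_⟩
    rw [BoundedFormula.realize_all, BoundedFormula.realize_all]
    refine forall_congr' fun x => ?_
    rw [BoundedFormula.realize_imp, BoundedFormula.realize_imp, e, ltFm_realize, ltFm_realize,
      liftAt_realize, liftAt_realize, subst_eval, evL_ext, evR_ext]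
    simp

/-- The substitution statement for a formula class. -/
def SubstOK (C : ∀ {α : Type} (n : ℕ), lang.BoundedFormula α n → Prop)
    {α : Type} {n : ℕ} (φ : lang.BoundedFormula α n) : Prop :=
  ∀ (β : Type) (n' : ℕ) (σ : α ⊕ Fin n → lang.Term (β ⊕ Fin n')),
      ∃ ψ : lang.BoundedFormula β n', C n' ψ ∧
        ∀ (X : Type) [lang.Structure X] (v : β → X) (xs : Fin n' → X),
          ψ.Realize v xs ↔ φ.Realize (evL σ v xs) (evR σ v xs)

mutual
theorem sigma_subst {α : Type} : ∀ (m n : ℕ) (φ : lang.BoundedFormula α n), SigmaFm m n φ →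
    SubstOK (fun n ψ => SigmaFm m n ψ) φ
  | _, _, _, .delta0 m n h => fun β n' σ => by
      obtain ⟨ψ, h, e⟩ := delta_subst (β := β) h n' σ
      exact ⟨ψ, .delta0 m n' h, e⟩
  | _, _, _, .ofPi m n h => fun β n' σ => by
      obtain ⟨ψ, h, e⟩ := pi_subst _ _ _ h β n' σ
      exact ⟨ψ, .ofPi m n' h, e⟩
  | _, _, _, .ex m n h => fun β n' σ => by
      obtain ⟨ψ, h, e⟩ := sigma_subst _ _ _ h β (n' + 1) (extS σ)
      refine ⟨ψ.ex, .ex m n' h, fun X _ v xs => ?_⟩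
      rw [BoundedFormula.realize_ex, BoundedFormula.realize_ex]
      refine exists_congr fun x => ?_
      rw [e, evL_ext, evR_ext]
theorem pi_subst {α : Type} : ∀ (m n : ℕ) (φ : lang.BoundedFormula α n), PiFm m n φ →
    SubstOK (fun n ψ => PiFm m n ψ) φ
  | _, _, _, .delta0 m n h => fun β n' σ => by
      obtain ⟨ψ, h, e⟩ := delta_subst (β := β) h n' σ
      exact ⟨ψ, .delta0 m n' h, e⟩
  | _, _, _, .ofSigma m n h => fun β n' σ => by
      obtain ⟨ψ, h, e⟩ := sigma_subst _ _ _ h β n' σ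
      exact ⟨ψ, .ofSigma m n' h, e⟩
  | _, _, _, .all m n h => fun β n' σ => by
      obtain ⟨ψ, h, e⟩ := pi_subst _ _ _ h β (n' + 1) (extS σ)
      refine ⟨ψ.all, .all m n' h, fun X _ v xs => ?_⟩
      rw [BoundedFormula.realize_all, BoundedFormula.realize_all]
      refine forall_congr' fun x => ?_
      rw [e, evL_ext, evR_ext]
end

/-- Logical equivalence in all structures. -/
def Eqv {α : Type} {n : ℕ} (φ : lang.BoundedFormula α n)
    (R : ∀ (X : Type) [lang.Structure X], (α → X) → (Fin n → X) → Prop) : Prop :=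
  ∀ (X : Type) [lang.Structure X] (v : α → X) (xs : Fin n → X), φ.Realize v xs ↔ R X v xs

mutual
theorem sigma_neg {α : Type} : ∀ (m n : ℕ) (φ : lang.BoundedFormula α n), SigmaFm m n φ →
    ∃ ψ, PiFm m n ψ ∧ Eqv ψ (fun _ _ v xs => ¬ φ.Realize v xs)
  | _, _, _, .delta0 m n h => ⟨_, .delta0 m n (.imp n h (.falsum n)), fun X _ v xs => Iff.rfl⟩
  | _, _, _, .ofPi m n h => by
      obtain ⟨ψ, h, e⟩ := pi_neg _ _ _ h
      exact ⟨ψ, .ofSigma m n h, e⟩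
  | _, _, _, .ex m n h => by
      obtain ⟨ψ, h, e⟩ := sigma_neg _ _ _ h
      refine ⟨ψ.all, .all m n h, fun X _ v xs => ?_⟩
      beta_reduce
      rw [BoundedFormula.realize_all, BoundedFormula.realize_ex, not_exists]
      exact forall_congr' fun x => e X v _
theorem pi_neg {α : Type} : ∀ (m n : ℕ) (φ : lang.BoundedFormula α n), PiFm m n φ →
    ∃ ψ, SigmaFm m n ψ ∧ Eqv ψ (fun _ _ v xs => ¬ φ.Realize v xs)
  | _, _, _, .delta0 m n h => ⟨_, .delta0 m n (.imp n h (.falsum n)), fun X _ v xs => Iff.rfl⟩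
  | _, _, _, .ofSigma m n h => by
      obtain ⟨ψ, h, e⟩ := sigma_neg _ _ _ h
      exact ⟨ψ, .ofPi m n h, e⟩
  | _, _, _, .all m n h => by
      obtain ⟨ψ, h, e⟩ := pi_neg _ _ _ h
      refine ⟨ψ.ex, .ex m n h, fun X _ v xs => ?_⟩
      beta_reduce
      rw [BoundedFormula.realize_all, BoundedFormula.realize_ex, not_forall]
      exact exists_congr fun x => e X v _
end

mutual
theorem sigma_succ {α : Type} : ∀ (m n : ℕ) (φ : lang.BoundedFormula α n), SigmaFm m n φ →
    SigmaFm (m + 1) n φ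
  | _, _, _, .delta0 m n h => .delta0 _ n h
  | _, _, _, .ofPi m n h => .ofPi _ n (pi_succ _ _ _ h)
  | _, _, _, .ex m n h => .ex _ n (sigma_succ _ _ _ h)
theorem pi_succ {α : Type} : ∀ (m n : ℕ) (φ : lang.BoundedFormula α n), PiFm m n φ →
    PiFm (m + 1) n φ
  | _, _, _, .delta0 m n h => .delta0 _ n h
  | _, _, _, .ofSigma m n h => .ofSigma _ n (sigma_succ _ _ _ h)
  | _, _, _, .all m n h => .all _ n (pi_succ _ _ _ h)
end

/-- Weakening substitution. -/
def wk {α : Type} {n : ℕ} : α ⊕ Fin n → lang.Term (α ⊕ Fin (n + 1)) :=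
  Sum.elim (fun a => Term.var (Sum.inl a)) (fun i => Term.var (Sum.inr i.castSucc))

theorem sigma_wk {α : Type} {m n : ℕ} {φ : lang.BoundedFormula α n} (h : SigmaFm m n φ) :
    ∃ ψ : lang.BoundedFormula α (n + 1), SigmaFm m (n + 1) ψ ∧
      ∀ (X : Type) [lang.Structure X] (v : α → X) (xs : Fin n → X) (x : X),
        ψ.Realize v (Fin.snoc xs x) ↔ φ.Realize v xs := by
  obtain ⟨ψ, h, e⟩ := sigma_subst _ _ _ h α (n + 1) wk
  refine ⟨ψ, h, fun X _ v xs x => ?_⟩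
  rw [e]
  have h1 : evL (wk (α := α) (n := n)) v (Fin.snoc xs x : Fin (n + 1) → X) = v := rfl
  have h2 : evR (wk (α := α) (n := n)) v (Fin.snoc xs x : Fin (n + 1) → X) = xs := by
    funext i; simp [evR, wk]
  rw [h1, h2]

/-- Binary propositional operations commuting with existential quantification. -/
structure GoodOp (op : Prop → Prop → Prop) : Prop where
  congr : ∀ p p' q q', (p ↔ p') → (q ↔ q') → (op p q ↔ op p' q')
  left : ∀ (X : Type) [Nonempty X] (p : X → Prop) (q : Prop), op (∃ x, p x) q ↔ ∃ x, op (p x) q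
  right : ∀ (X : Type) [Nonempty X] (p : Prop) (q : X → Prop), op p (∃ x, q x) ↔ ∃ x, op p (q x)

theorem goodAnd : GoodOp And := ⟨fun _ _ _ _ h1 h2 => and_congr h1 h2,
  fun _ _ _ _ => exists_and_right.symm, fun _ _ _ _ => exists_and_left.symm⟩

theorem goodOr : GoodOp Or := ⟨fun _ _ _ _ h1 h2 => or_congr h1 h2,
  fun X _ p q => by simp [exists_or], fun X _ p q => by simp [exists_or]⟩

def SigClosed (m : ℕ) (op : Prop → Prop → Prop) : Prop :=
  ∀ (α : Type) (n : ℕ) (φ ψ : lang.BoundedFormula α n), SigmaFm m n φ → SigmaFm m n ψ →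
    ∃ χ, SigmaFm m n χ ∧ Eqv χ (fun _ _ v xs => op (φ.Realize v xs) (ψ.Realize v xs))

def PiClosed (m : ℕ) (op : Prop → Prop → Prop) : Prop :=
  ∀ (α : Type) (n : ℕ) (φ ψ : lang.BoundedFormula α n), PiFm m n φ → PiFm m n ψ →
    ∃ χ, PiFm m n χ ∧ Eqv χ (fun _ _ v xs => op (φ.Realize v xs) (ψ.Realize v xs))

theorem SigClosed.pi {m : ℕ} {op op' : Prop → Prop → Prop} (h : SigClosed m op)
    (hd : ∀ p q, op' p q ↔ ¬ op (¬ p) (¬ q)) (hg : GoodOp op) : PiClosed m op' := by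
  intro α n φ ψ hφ hψ
  obtain ⟨φ', h1, e1⟩ := pi_neg _ _ _ hφ
  obtain ⟨ψ', h2, e2⟩ := pi_neg _ _ _ hψ
  obtain ⟨χ, h3, e3⟩ := h _ _ _ _ h1 h2
  obtain ⟨χ', h4, e4⟩ := sigma_neg _ _ _ h3
  refine ⟨χ', h4, fun X _ v xs => ?_⟩
  rw [e4]
  beta_reduce
  rw [hd, not_iff_not, e3]
  exact hg.congr _ _ _ _ (e1 X v xs) (e2 X v xs)

theorem sigClosed_right {m : ℕ} {op : Prop → Prop → Prop} (hg : GoodOp op) (hp : PiClosed m op)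
    {α : Type} : ∀ (m' n : ℕ) (ψ : lang.BoundedFormula α n), SigmaFm m' n ψ → m' = m + 1 →
      ∀ φ : lang.BoundedFormula α n, PiFm m n φ →
        ∃ χ, SigmaFm (m + 1) n χ ∧ Eqv χ (fun _ _ v xs => op (φ.Realize v xs) (ψ.Realize v xs))
  | _, _, _, .delta0 m' n h => fun _ φ hφ => by
      obtain ⟨χ, h, e⟩ := hp _ _ _ _ hφ (.delta0 m n h)
      exact ⟨χ, .ofPi m n h, e⟩
  | _, _, _, .ofPi m' n h => fun hm φ hφ => by
      obtain rfl : m' = m := by omega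
      obtain ⟨χ, h, e⟩ := hp _ _ _ _ hφ h
      exact ⟨χ, .ofPi _ n h, e⟩
  | _, _, _, .ex m' n h => fun hm φ hφ => by
      obtain rfl : m' = m := by omega
      obtain ⟨φ', hφ', eφ⟩ := pi_subst _ _ _ hφ α (n + 1) wk
      obtain ⟨χ, h, e⟩ := sigClosed_right hg hp _ _ _ h rfl φ' hφ'
      refine ⟨χ.ex, .ex _ n h, fun X _ v xs => ?_⟩
      have : Nonempty X := ⟨0⟩
      beta_reduce
      rw [BoundedFormula.realize_ex, hg.congr _ _ _ _ Iff.rfl BoundedFormula.realize_ex, hg.right]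
      refine exists_congr fun x => ?_
      rw [e]
      refine hg.congr _ _ _ _ ?_ Iff.rfl
      rw [eφ]
      have h1 : evL (wk (α := α) (n := n)) v (Fin.snoc xs x : Fin (n + 1) → X) = v := rfl
      have h2 : evR (wk (α := α) (n := n)) v (Fin.snoc xs x : Fin (n + 1) → X) = xs := by
        funext i; simp [evR, wk]
      rw [h1, h2]

theorem sigClosed_left {m : ℕ} {op : Prop → Prop → Prop} (hg : GoodOp op) (hp : PiClosed m op)
    {α : Type} : ∀ (m' n : ℕ) (φ : lang.BoundedFormula α n), SigmaFm m' n φ → m' = m + 1 →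
      ∀ ψ : lang.BoundedFormula α n, SigmaFm (m + 1) n ψ →
        ∃ χ, SigmaFm (m + 1) n χ ∧ Eqv χ (fun _ _ v xs => op (φ.Realize v xs) (ψ.Realize v xs))
  | _, _, _, .delta0 m' n h => fun _ ψ hψ =>
      sigClosed_right hg hp _ _ ψ hψ rfl _ (.delta0 m n h)
  | _, _, _, .ofPi m' n h => fun hm ψ hψ => by
      obtain rfl : m' = m := by omega
      exact sigClosed_right hg hp _ _ ψ hψ rfl _ h
  | _, _, _, .ex m' n h => fun hm ψ hψ => by
      obtain rfl : m' = m := by omega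
      obtain ⟨ψ', hψ', eψ⟩ := sigma_wk hψ
      obtain ⟨χ, h, e⟩ := sigClosed_left hg hp _ _ _ h rfl ψ' hψ'
      refine ⟨χ.ex, .ex _ n h, fun X _ v xs => ?_⟩
      have : Nonempty X := ⟨0⟩
      beta_reduce
      rw [BoundedFormula.realize_ex, hg.congr _ _ _ _ BoundedFormula.realize_ex Iff.rfl, hg.left]
      refine exists_congr fun x => ?_
      rw [e]
      exact hg.congr _ _ _ _ Iff.rfl (eψ X v xs x)

theorem SigmaFm.zero_delta {α : Type} {n : ℕ} {φ : lang.BoundedFormula α n}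
    (h : SigmaFm 0 n φ) : IsDelta0 n φ := by
  cases h; assumption

theorem sigClosed (m : ℕ) : SigClosed m And ∧ SigClosed m Or := by
  induction m with
  | zero =>
    constructor
    · intro α n φ ψ h1 h2
      refine ⟨(φ.imp (ψ.imp .falsum)).imp .falsum, .delta0 _ _ (.imp _ (.imp _ h1.zero_delta
        (.imp _ h2.zero_delta (.falsum _))) (.falsum _)), fun X _ v xs => ?_⟩
      simp only [BoundedFormula.Realize]
      tauto
    · intro α n φ ψ h1 h2
      refine ⟨(φ.imp .falsum).imp ψ, .delta0 _ _ (.imp _ (.imp _ h1.zero_delta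
        (.falsum _)) h2.zero_delta), fun X _ v xs => ?_⟩
      simp only [BoundedFormula.Realize]
      tauto
  | succ m ih =>
    constructor
    · intro α n φ ψ h1 h2
      exact sigClosed_left goodAnd (ih.2.pi (by intros; tauto) goodOr) _ _ φ h1 rfl ψ h2
    · intro α n φ ψ h1 h2
      exact sigClosed_left goodOr (ih.1.pi (by intros; tauto) goodAnd) _ _ φ h1 rfl ψ h2

end Syn
end ArithFC

open FirstOrder Language
namespace ArithFC

/-! ### Definability calculus, uniformly over the models of a theory -/

section Calc

/-- A class of structures. -/
abbrev Th := ∀ (X : Type) [lang.Structure X], Prop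

/-- A uniform relation in the variables `α`. -/
abbrev Rl (α : Type) := ∀ (X : Type) [lang.Structure X], (α → X) → Prop

/-- Σ_m (`true`) or Π_m (`false`) formulas. -/
def Fm (b : Bool) (m : ℕ) {α : Type} (n : ℕ) (φ : lang.BoundedFormula α n) : Prop :=
  match b with
  | true => SigmaFm m n φ
  | false => PiFm m n φ

/-- A uniform function given by a term. -/
def Tm {α : Type} (f : ∀ (X : Type) [lang.Structure X], (α → X) → X) : Prop :=
  ∃ t : lang.Term α, ∀ (X : Type) [lang.Structure X] (v : α → X), f X v = t.realize v

/-- Uniform definability over a theory. -/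
def Df (T : Th) (b : Bool) (m : ℕ) {α : Type} (R : Rl α) : Prop :=
  ∃ φ : lang.BoundedFormula α 0, Fm b m 0 φ ∧
    ∀ (X : Type) [lang.Structure X], T X → ∀ v : α → X, R X v ↔ φ.Realize v finZeroElim

variable {T : Th} {b : Bool} {m : ℕ} {α β : Type}

theorem Tm.var (a : α) : Tm (fun _ _ v => v a) := ⟨Term.var a, fun _ _ _ => rfl⟩

theorem Tm.zero : Tm (α := α) (fun X _ _ => (0 : X)) :=
  ⟨Term.func (L := lang) Func.zero ![], fun X _ v => by
    show Structure.funMap _ _ = Structure.funMap _ _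
    congr 1; funext i; exact i.elim0⟩

theorem Tm.one : Tm (α := α) (fun X _ _ => (1 : X)) :=
  ⟨Term.func (L := lang) Func.one ![], fun X _ v => by
    show Structure.funMap _ _ = Structure.funMap _ _
    congr 1; funext i; exact i.elim0⟩

theorem Tm.add {f g : ∀ (X : Type) [lang.Structure X], (α → X) → X} (hf : Tm f) (hg : Tm g) :
    Tm (fun X _ v => f X v + g X v) := by
  obtain ⟨t, ht⟩ := hf
  obtain ⟨u, hu⟩ := hg
  refine ⟨Term.func (L := lang) Func.add ![t, u], fun X _ v => ?_⟩
  beta_reduce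
  rw [ht, hu]
  show Structure.funMap _ _ = Structure.funMap _ _
  congr 1; funext i
  refine Fin.cases rfl (fun i => ?_) i
  refine Fin.cases rfl (fun i => i.elim0) i

theorem Tm.mul {f g : ∀ (X : Type) [lang.Structure X], (α → X) → X} (hf : Tm f) (hg : Tm g) :
    Tm (fun X _ v => f X v * g X v) := by
  obtain ⟨t, ht⟩ := hf
  obtain ⟨u, hu⟩ := hg
  refine ⟨Term.func (L := lang) Func.mul ![t, u], fun X _ v => ?_⟩
  beta_reduce
  rw [ht, hu]
  show Structure.funMap _ _ = Structure.funMap _ _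
  congr 1; funext i
  refine Fin.cases rfl (fun i => ?_) i
  refine Fin.cases rfl (fun i => i.elim0) i

theorem Fm.delta0 {n : ℕ} {φ : lang.BoundedFormula α n} (h : IsDelta0 n φ) : Fm b m n φ := by
  cases b
  · exact PiFm.delta0 m n h
  · exact SigmaFm.delta0 m n h

theorem Fm.subst {n : ℕ} {φ : lang.BoundedFormula α n} (h : Fm b m n φ) :
    SubstOK (fun n ψ => Fm b m n ψ) φ := by
  cases b
  · exact pi_subst _ _ _ h
  · exact sigma_subst _ _ _ h

theorem fin0 {X : Type} (f g : Fin 0 → X) : f = g := funext fun i => i.elim0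

theorem Df.iff {R S : Rl α} (h : Df T b m R)
    (e : ∀ (X : Type) [lang.Structure X], T X → ∀ v : α → X, S X v ↔ R X v) : Df T b m S := by
  obtain ⟨φ, h, e'⟩ := h
  exact ⟨φ, h, fun X _ hX v => (e X hX v).trans (e' X hX v)⟩

theorem Df.mono {T' : Th} {R : Rl α} (h : Df T b m R)
    (e : ∀ (X : Type) [lang.Structure X], T' X → T X) : Df T' b m R := by
  obtain ⟨φ, h, e'⟩ := h
  exact ⟨φ, h, fun X _ hX v => e' X (e X hX) v⟩

theorem Df.lower {R : Rl α} (h : Df T (!b) m R) : Df T b (m + 1) R := by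
  obtain ⟨φ, h, e'⟩ := h
  refine ⟨φ, ?_, e'⟩
  cases b
  · exact PiFm.ofSigma _ _ h
  · exact SigmaFm.ofPi _ _ h

theorem Df.succ {R : Rl α} (h : Df T b m R) : Df T b (m + 1) R := by
  obtain ⟨φ, h, e'⟩ := h
  refine ⟨φ, ?_, e'⟩
  cases b
  · exact pi_succ _ _ _ h
  · exact sigma_succ _ _ _ h

theorem Df.le_level {R : Rl α} {m' : ℕ} (h : Df T b m R) (hm : m ≤ m') : Df T b m' R := by
  induction hm with
  | refl => exact h
  | step _ ih => exact ih.succ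

theorem Df.not {R : Rl α} (h : Df T (!b) m R) : Df T b m (fun X _ v => ¬ R X v) := by
  obtain ⟨φ, h, e'⟩ := h
  cases b
  · obtain ⟨ψ, h, e⟩ := sigma_neg _ _ _ h
    exact ⟨ψ, h, fun X _ hX v => by rw [e]; exact not_congr (e' X hX v)⟩
  · obtain ⟨ψ, h, e⟩ := pi_neg _ _ _ h
    exact ⟨ψ, h, fun X _ hX v => by rw [e]; exact not_congr (e' X hX v)⟩

theorem Df.and {R S : Rl α} (h : Df T b m R) (h' : Df T b m S) :
    Df T b m (fun X _ v => R X v ∧ S X v) := by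
  obtain ⟨φ, h1, e1⟩ := h
  obtain ⟨ψ, h2, e2⟩ := h'
  obtain ⟨χ, h, e⟩ : ∃ χ, Fm b m 0 χ ∧
      Eqv χ (fun _ _ v xs => φ.Realize v xs ∧ ψ.Realize v xs) := by
    cases b
    · exact (sigClosed m).2.pi (by intros; tauto) goodOr _ _ _ _ h1 h2
    · exact (sigClosed m).1 _ _ _ _ h1 h2
  exact ⟨χ, h, fun X _ hX v => by rw [e]; exact and_congr (e1 X hX v) (e2 X hX v)⟩

theorem Df.or {R S : Rl α} (h : Df T b m R) (h' : Df T b m S) :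
    Df T b m (fun X _ v => R X v ∨ S X v) := by
  obtain ⟨φ, h1, e1⟩ := h
  obtain ⟨ψ, h2, e2⟩ := h'
  obtain ⟨χ, h, e⟩ : ∃ χ, Fm b m 0 χ ∧
      Eqv χ (fun _ _ v xs => φ.Realize v xs ∨ ψ.Realize v xs) := by
    cases b
    · exact (sigClosed m).1.pi (by intros; tauto) goodAnd _ _ _ _ h1 h2
    · exact (sigClosed m).2 _ _ _ _ h1 h2
  exact ⟨χ, h, fun X _ hX v => by rw [e]; exact or_congr (e1 X hX v) (e2 X hX v)⟩

theorem Df.imp {R S : Rl α} (h : Df T (!b) m R) (h' : Df T b m S) :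
    Df T b m (fun X _ v => R X v → S X v) :=
  (h.not.or h').iff fun _ _ _ _ => imp_iff_not_or

theorem Df.eq {f g : ∀ (X : Type) [lang.Structure X], (α → X) → X} (hf : Tm f) (hg : Tm g) :
    Df T b m (fun X _ v => f X v = g X v) := by
  obtain ⟨t, ht⟩ := hf
  obtain ⟨u, hu⟩ := hg
  refine ⟨_, Fm.delta0 (.equal 0 (t.relabel Sum.inl) (u.relabel Sum.inl)), fun X _ _ v => ?_⟩
  show _ ↔ _ = _
  beta_reduce
  rw [ht, hu, Term.realize_relabel, Term.realize_relabel]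
  rfl

theorem Df.lt {f g : ∀ (X : Type) [lang.Structure X], (α → X) → X} (hf : Tm f) (hg : Tm g) :
    Df T b m (fun X _ v => f X v < g X v) := by
  obtain ⟨t, ht⟩ := hf
  obtain ⟨u, hu⟩ := hg
  refine ⟨ltFm (t.relabel Sum.inl) (u.relabel Sum.inl), Fm.delta0 (.rel _ _ _ _),
    fun X _ _ v => ?_⟩
  beta_reduce
  rw [ltFm_realize, ht, hu, Term.realize_relabel, Term.realize_relabel]
  rfl

theorem Df.le {f g : ∀ (X : Type) [lang.Structure X], (α → X) → X} (hf : Tm f) (hg : Tm g) :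
    Df T b m (fun X _ v => f X v ≤ g X v) :=
  (Df.lt hf hg).or (Df.eq hf hg)

theorem Df.comp {R : Rl β} (h : Df T b m R) {f : β → ∀ (X : Type) [lang.Structure X], (α → X) → X}
    (hf : ∀ c, Tm (f c)) : Df T b m (fun X _ v => R X (fun c => f c X v)) := by
  obtain ⟨φ, h, e⟩ := h
  choose t ht using hf
  obtain ⟨ψ, h', e'⟩ := h.subst α 0 (Sum.elim (fun c => (t c).relabel Sum.inl) Fin.elim0)
  refine ⟨ψ, h', fun X _ hX v => ?_⟩
  beta_reduce
  rw [e', e X hX]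
  apply iff_of_eq
  congr 1
  · funext c
    simp only [evL, Sum.elim_inl, Term.realize_relabel, ht]
    rfl
  · exact fin0 _ _

/-- Turning the variable `none` into a bound variable. -/
theorem Df.unbind {R : Rl (Option α)} (h : Df T b m R) :
    ∃ ψ : lang.BoundedFormula α 1, Fm b m 1 ψ ∧
      ∀ (X : Type) [lang.Structure X], T X → ∀ (v : α → X) (x : X),
        ψ.Realize v (Fin.snoc finZeroElim x) ↔ R X (fun o => o.elim x v) := by
  obtain ⟨φ, h, e⟩ := h
  obtain ⟨ψ, h', e'⟩ := h.subst α 1 (Sum.elim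
    (fun c => Term.var (c.elim (Sum.inr 0) Sum.inl)) Fin.elim0)
  refine ⟨ψ, h', fun X _ hX v x => ?_⟩
  rw [e', e X hX]
  apply iff_of_eq
  congr 1
  · funext c
    rcases c with _ | c <;> rfl
  · exact fin0 _ _

theorem Df.ex {P : ∀ (X : Type) [lang.Structure X], (α → X) → X → Prop}
    (h : Df T true (m + 1) (fun X _ (w : Option α → X) => P X (fun a => w (some a)) (w none))) :
    Df T true (m + 1) (fun X _ v => ∃ x, P X v x) := by
  obtain ⟨ψ, h, e⟩ := h.unbind
  refine ⟨ψ.ex, SigmaFm.ex _ _ h, fun X _ hX v => ?_⟩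
  rw [BoundedFormula.realize_ex]
  exact exists_congr fun x => (e X hX v x).symm

theorem Df.all {P : ∀ (X : Type) [lang.Structure X], (α → X) → X → Prop}
    (h : Df T false (m + 1) (fun X _ (w : Option α → X) => P X (fun a => w (some a)) (w none))) :
    Df T false (m + 1) (fun X _ v => ∀ x, P X v x) := by
  obtain ⟨ψ, h, e⟩ := h.unbind
  refine ⟨ψ.all, PiFm.all _ _ h, fun X _ hX v => ?_⟩
  rw [BoundedFormula.realize_all]
  exact forall_congr' fun x => (e X hX v x).symm

theorem PiFm.zero_delta {α : Type} {n : ℕ} {φ : lang.BoundedFormula α n}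
    (h : PiFm 0 n φ) : IsDelta0 n φ := by
  cases h; assumption

theorem Fm.zero_delta {n : ℕ} {φ : lang.BoundedFormula α n} (h : Fm b 0 n φ) : IsDelta0 n φ := by
  cases b
  · exact PiFm.zero_delta h
  · exact SigmaFm.zero_delta h

theorem Df.flip0 {R : Rl α} {b' : Bool} (h : Df T b 0 R) : Df T b' 0 R := by
  obtain ⟨φ, h, e⟩ := h
  exact ⟨φ, Fm.delta0 h.zero_delta, e⟩

theorem Df.ball0 {P : ∀ (X : Type) [lang.Structure X], (α → X) → X → Prop}
    {f : ∀ (X : Type) [lang.Structure X], (α → X) → X} (hf : Tm f)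
    (h : Df T b 0 (fun X _ (w : Option α → X) => P X (fun a => w (some a)) (w none))) :
    Df T b 0 (fun X _ v => ∀ x, x < f X v → P X v x) := by
  obtain ⟨ψ, h, e⟩ := h.unbind
  obtain ⟨t, ht⟩ := hf
  refine ⟨_, Fm.delta0 (.bdAll 0 (t.relabel Sum.inl) h.zero_delta), fun X _ hX v => ?_⟩
  rw [BoundedFormula.realize_all]
  refine forall_congr' fun x => ?_
  rw [BoundedFormula.realize_imp, e X hX, ltFm_realize, liftAt_realize, Term.realize_relabel, ht]
  rfl

theorem Df.ballPi {P : ∀ (X : Type) [lang.Structure X], (α → X) → X → Prop}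
    {f : ∀ (X : Type) [lang.Structure X], (α → X) → X} (hf : Tm f)
    (h : Df T false m (fun X _ (w : Option α → X) => P X (fun a => w (some a)) (w none))) :
    Df T false m (fun X _ v => ∀ x, x < f X v → P X v x) := by
  cases m with
  | zero => exact Df.ball0 hf h
  | succ m =>
    apply Df.all
    apply Df.imp _ h
    apply Df.lt (Tm.var none)
    obtain ⟨t, ht⟩ := hf
    refine ⟨t.relabel some, fun X _ v => ?_⟩
    beta_reduce
    rw [ht, Term.realize_relabel]
    rfl

theorem Df.neg_iff {R : Rl α} : Df T b m R ↔ Df T (!b) m (fun X _ v => ¬ R X v) := by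
  constructor
  · intro h
    exact Df.not (by simpa using h)
  · intro h
    exact (Df.not h).iff fun X _ _ v => not_not.symm

end Calc

/-! ### Transfer -/

section Transfer

variable {M N : Type} [lang.Structure M] [lang.Structure N] {n : ℕ} {g : M → N} {T : Th}

theorem transfer {b : Bool} {m : ℕ} {α : Type} [Finite α] (hel : SigmaElem M N n g) (hM : T M)
    (hN : T N) {R : Rl α} (h : Df T b m R) (hm : m ≤ n) (v : α → M) : R M v ↔ R N (g ∘ v) := by
  have key : ∀ S : Rl α, Df T true n S → ∀ v, S M v ↔ S N (g ∘ v) := by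
    intro S hS v
    obtain ⟨p, ⟨e⟩⟩ := Finite.exists_equiv_fin α
    obtain ⟨φ, hφ, eφ⟩ := hS.comp (f := fun a X _ w => w (e a)) (fun c => Tm.var (e c))
    have := hel p φ hφ (v ∘ e.symm)
    rw [← eφ M hM, ← Function.comp_assoc, ← eφ N hN] at this
    simpa [Function.comp_def] using this
  have h' := h.le_level hm
  cases b
  · exact not_iff_not.1 (key _ (Df.neg_iff.1 h') v)
  · exact key _ h' v

theorem transfer_all {α : Type} [Finite α] (hel : SigmaElem M N (n + 1) g) (hM : T M)
    (hN : T N) {m : ℕ} {R : Rl α} (h : Df T false m R) (hm : m ≤ n + 1)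
    (hR : ∀ v, R M v) : ∀ v, R N v := by
  have key : ∀ (p : ℕ) (S : Rl (Fin p)), Df T false (n + 1) S → (∀ v, S M v) → ∀ v, S N v := by
    intro p
    induction p with
    | zero =>
      intro S hS h v
      have := (transfer hel hM hN hS le_rfl finZeroElim).1 (h _)
      rwa [fin0 v (g ∘ finZeroElim)]
    | succ p ih =>
      intro S hS h v
      have h1 : Df T false (n + 1)
          (fun X _ (w : Fin p → X) => ∀ x : X, S X (Fin.cons x w : Fin (p + 1) → X)) := by
        apply Df.all
        refine (hS.comp (f := fun i X _ w => w (Fin.cons none (fun j => some j) i))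
          (fun c => Tm.var _)).iff fun X _ _ w => ?_
        apply iff_of_eq
        congr 1
        funext c
        refine Fin.cases ?_ (fun c => ?_) c <;> simp
      have := ih _ h1 (fun w x => h _) (Fin.tail v) (v 0)
      rwa [Fin.cons_self_tail] at this
  obtain ⟨p, ⟨e⟩⟩ := Finite.exists_equiv_fin α
  intro v
  have := key p (fun X _ w => R X (fun a => w (e a)))
    ((h.le_level hm).comp (f := fun a X _ w => w (e a)) (fun c => Tm.var (e c)))
    (fun w => hR _) (v ∘ e.symm)
  simpa [Function.comp_def] using this

end Transfer
end ArithFC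

open FirstOrder Language
namespace ArithFC

/-! ### Arithmetic -/

section Abstract

variable {R : Type} [CommSemiring R] [LinearOrder R] [IsStrictOrderedRing R]

theorem ab_pair_le (hz : ∀ x : R, 0 ≤ x) (hd : ∀ x y : R, x < y → x + 1 ≤ y) {x y x' y' : R}
    (h : (x + y) * (x + y + 1) + (y + y) = (x' + y') * (x' + y' + 1) + (y' + y')) :
    ¬ x + y < x' + y' := by
  intro hlt
  have h1 := hd _ _ hlt
  have h2 : (x + y) * (x + y + 1) + (y + y) < (x + y + 1) * (x + y + 1 + 1) := by
    have e : (x + y + 1) * (x + y + 1 + 1) =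
        (x + y) * (x + y + 1) + (y + y) + (x + x + (1 + 1)) := by ring
    rw [e]
    have : (0 : R) < x + x + (1 + 1) := by
      have := hz x
      positivity
    exact lt_add_of_pos_right _ this
  have h3 : (x + y + 1) * (x + y + 1 + 1) ≤ (x' + y') * (x' + y' + 1) := by
    have := hz x; have := hz y; have := hz x'; have := hz y'
    gcongr
  have h4 : (x' + y') * (x' + y' + 1) ≤ (x' + y') * (x' + y' + 1) + (y' + y') :=
    le_add_of_nonneg_right (add_nonneg (hz _) (hz _))
  exact absurd h (ne_of_lt (h2.trans_le (h3.trans h4)))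

theorem ab_double_inj {x y : R} (h : x + x = y + y) : x = y := by
  rcases lt_trichotomy x y with h1 | h1 | h1
  · exact absurd h (ne_of_lt (add_lt_add h1 h1))
  · exact h1
  · exact absurd h (ne_of_gt (add_lt_add h1 h1))

theorem ab_pair (hz : ∀ x : R, 0 ≤ x) (hd : ∀ x y : R, x < y → x + 1 ≤ y) {x y x' y' : R}
    (h : (x + y) * (x + y + 1) + (y + y) = (x' + y') * (x' + y' + 1) + (y' + y')) :
    x = x' ∧ y = y' := by
  have e : x + y = x' + y' :=
    le_antisymm (not_lt.1 (ab_pair_le hz hd h.symm)) (not_lt.1 (ab_pair_le hz hd h))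
  rw [e] at h
  have := ab_double_inj (add_left_cancel h)
  subst this
  exact ⟨add_right_cancel e, rfl⟩

theorem ab_even_odd (hd : ∀ x y : R, x < y → x + 1 ≤ y) {x y : R} : x + x ≠ y + y + 1 := by
  intro h
  rcases lt_trichotomy x y with h1 | h1 | h1
  · have : x + x < y + y + 1 := (add_lt_add h1 h1).trans (lt_add_one _)
    exact absurd h this.ne
  · subst h1
    exact absurd h (lt_add_one _).ne
  · have h2 := hd _ _ h1
    have : y + y + 1 < x + x := by
      calc y + y + 1 < y + y + 1 + 1 := lt_add_one _
        _ = (y + 1) + (y + 1) := by ring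
        _ ≤ x + x := add_le_add h2 h2
    exact absurd h this.ne'

theorem ab_stretch (hz : ∀ x : R, 0 ≤ x) {t x p c : R} (hx : x ≤ t) (hp : p ≤ c) :
    ((x + p) * (x + p + 1) + (p + p)) + ((x + p) * (x + p + 1) + (p + p)) + 1 ≤
    ((t + c) * (t + c + 1) + (c + c)) + ((t + c) * (t + c + 1) + (c + c)) + 1 := by
  have := hz x; have := hz p; have := hz t; have := hz c
  gcongr

theorem ab_beta (i d : R) : (i + 1) * (d + d) + 1 = (i + i + 1 + 1) * d + 1 := by ring

theorem ab_parity_pair (K q : R) (y : R) (h : K = q * (1 + 1)) :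
    (q * (K + 1) + y) + (q * (K + 1) + y) = K * (K + 1) + (y + y) := by subst h; ring

theorem ab_parity_pair' (K q : R) (y : R) (h : K = q * (1 + 1) + 1) :
    ((q + 1) * K + y) + ((q + 1) * K + y) = K * (K + 1) + (y + y) := by subst h; ring

theorem ab_idx (hd : ∀ x y : R, x < y → x + 1 ≤ y) {i b : R} (h : i + 1 < b) :
    i + i + 1 + 1 + 1 < b + b := by
  have h1 := hd _ _ h
  have e : i + i + 1 + 1 + 1 = (i + 1) + (i + 1 + 1) := by ring
  rw [e]
  exact add_lt_add_of_lt_of_le h h1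

theorem ab_div_step (q d x : R) : q * (d + 1) + x + 1 = q * (d + 1) + (x + 1) := by ring
theorem ab_div_step' (q d : R) : q * (d + 1) + d + 1 = (q + 1) * (d + 1) + 0 := by ring

end Abstract

section Arith

variable {X : Type} [lang.Structure X]

/-- The commutative semiring of a model of PA⁻. -/
@[reducible] def PAm.semiring (h : PAm X) : CommSemiring X where
  add := (· + ·)
  add_assoc := h.add_assoc
  zero := 0
  zero_add x := by rw [h.add_comm, h.add_zero]
  add_zero := h.add_zero
  add_comm := h.add_comm
  mul := (· * ·)
  mul_assoc := h.mul_assoc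
  mul_comm := h.mul_comm
  one := 1
  one_mul x := by rw [h.mul_comm, h.mul_one]
  mul_one := h.mul_one
  zero_mul x := by rw [h.mul_comm, h.mul_zero]
  mul_zero := h.mul_zero
  left_distrib := h.ldistrib
  right_distrib x y z := by rw [h.mul_comm, h.ldistrib, h.mul_comm z x, h.mul_comm z y]
  nsmul := nsmulRec
  npow := npowRec

/-- The linear order of a model of PA⁻. -/
@[reducible] noncomputable def PAm.order (h : PAm X) : LinearOrder X where
  le := (· ≤ ·)
  lt := (· < ·)
  le_refl x := Or.inr rfl
  le_trans x y z h1 h2 := by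
    rcases h1 with h1 | rfl
    · rcases h2 with h2 | rfl
      · exact Or.inl (h.lt_trans _ _ _ h1 h2)
      · exact Or.inl h1
    · exact h2
  le_antisymm x y h1 h2 := by
    rcases h1 with h1 | rfl
    · rcases h2 with h2 | rfl
      · exact absurd (h.lt_trans _ _ _ h1 h2) (h.lt_irrefl _)
      · rfl
    · rfl
  lt_iff_le_not_ge x y := by
    constructor
    · intro h1
      refine ⟨Or.inl h1, ?_⟩
      rintro (h2 | rfl)
      · exact h.lt_irrefl _ (h.lt_trans _ _ _ h1 h2)
      · exact h.lt_irrefl _ h1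
    · rintro ⟨h1 | rfl, h2⟩
      · exact h1
      · exact absurd (Or.inr rfl) h2
  le_total x y := by
    rcases h.lt_total x y with h | h | h
    · exact Or.inl (Or.inl h)
    · exact Or.inl (Or.inr h)
    · exact Or.inr (Or.inl h)
  toDecidableLE := Classical.decRel _

theorem PAm.ordered (h : PAm X) : @IsStrictOrderedRing X h.semiring.toSemiring
    h.order.toPartialOrder := by
  letI := h.semiring
  letI := h.order
  haveI i1 : IsOrderedAddMonoid X := by
    refine ⟨?_, ?_⟩
    · intro x y hxy z
      rcases hxy with hxy | rfl
      · exact Or.inl (h.add_lt_add _ _ _ hxy)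
      · exact Or.inr rfl
    · intro x y hxy z
      rw [h.add_comm z, h.add_comm z]
      rcases hxy with hxy | rfl
      · exact Or.inl (h.add_lt_add _ _ _ hxy)
      · exact Or.inr rfl
  haveI i2 : IsOrderedCancelAddMonoid X := by
    refine { le_of_add_le_add_left := ?_ }
    intro x y z hxy
    by_contra hc
    have h1 : z < y := not_le.1 hc
    have h2 : z + x < y + x := h.add_lt_add _ _ x h1
    rw [h.add_comm z, h.add_comm y] at h2
    exact absurd hxy (not_le.2 h2)
  refine
    { zero_le_one := Or.inl h.zero_lt_one
      exists_pair_ne := ⟨0, 1, ?_⟩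
      mul_lt_mul_of_pos_left := ?_
      mul_lt_mul_of_pos_right := ?_ }
  · exact ne_of_lt h.zero_lt_one
  · intro x hx y z hyz
    have := h.mul_lt_mul y z x hyz hx
    rwa [h.mul_comm y, h.mul_comm z] at this
  · intro x hx y z hyz
    exact h.mul_lt_mul y z x hyz hx

theorem PAm.succ_le (h : PAm X) : ∀ x y : X, x < y → x + 1 ≤ y := by
  letI := h.semiring
  letI := h.order
  haveI := h.ordered
  intro x y hxy
  obtain ⟨z, rfl⟩ := h.sub_exists x y hxy
  have : (0 : X) < z := by
    rcases h.zero_le z with h1 | h1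
    · exact h1
    · subst h1
      rw [h.add_zero] at hxy
      exact absurd hxy (h.lt_irrefl _)
  exact add_le_add_right (h.discrete z this) x

theorem PAm.lt_succ (h : PAm X) {x y : X} : x < y + 1 ↔ x ≤ y := by
  letI := h.semiring
  letI := h.order
  haveI := h.ordered
  constructor
  · intro h1
    by_contra hc
    have := h.succ_le y x (not_le.1 hc)
    exact absurd h1 (not_lt.2 this)
  · intro h1
    exact lt_of_le_of_lt h1 (lt_add_one y)

theorem PAm.pair (h : PAm X) {s x y x' y' : X} (h1 : IsPairC s x y) (h2 : IsPairC s x' y') :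
    x = x' ∧ y = y' := by
  letI := h.semiring
  letI := h.order
  haveI := h.ordered
  exact ab_pair h.zero_le h.succ_le (Eq.trans (Eq.symm h1) h2)

theorem PAm.zero_or_succ (h : PAm X) (x : X) : x = 0 ∨ ∃ y, x = y + 1 := by
  rcases h.zero_le x with h1 | h1
  · right
    rcases h.discrete x h1 with h2 | h2
    · obtain ⟨z, hz⟩ := h.sub_exists _ _ h2
      exact ⟨z, by rw [← hz, h.add_comm]⟩
    · exact ⟨0, by rw [h.add_comm, h.add_zero, h2]⟩
  · exact Or.inl h1.symm

/-- Division with remainder. -/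
def Div (X : Type) [lang.Structure X] : Prop :=
  ∀ a d : X, ∃ q x, x < d + 1 ∧ a = q * (d + 1) + x

theorem PAm.parity (h : PAm X) (hD : Div X) (K : X) :
    (∃ q, K = q * (1 + 1)) ∨ ∃ q, K = q * (1 + 1) + 1 := by
  obtain ⟨q, x, hx, rfl⟩ := hD K 1
  rw [h.lt_succ] at hx
  rcases hx with hx | rfl
  · have h1 : x < 0 + 1 := by rwa [h.add_comm, h.add_zero]
    rw [h.lt_succ] at h1
    rcases h1 with h1 | rfl
    · rcases h.zero_le x with h2 | rfl
      · exact absurd (h.lt_trans _ _ _ h1 h2) (h.lt_irrefl _)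
      · exact absurd h1 (h.lt_irrefl _)
    · exact Or.inl ⟨q, h.add_zero _⟩
  · exact Or.inr ⟨q, rfl⟩

theorem PAm.pair_ex (h : PAm X) (hD : Div X) (x y : X) : ∃ s, IsPairC s x y := by
  letI := h.semiring
  letI := h.order
  haveI := h.ordered
  rcases h.parity hD (x + y) with ⟨q, hq⟩ | ⟨q, hq⟩
  · exact ⟨_, ab_parity_pair (x + y) q y hq⟩
  · exact ⟨_, ab_parity_pair' (x + y) q y hq⟩

theorem PAm.beta_ex (hD : Div X) (a d i : X) : ∃ x, BetaC a d i x := by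
  obtain ⟨q, x, hx, e⟩ := hD a ((i + 1) * d)
  exact ⟨x, hx, q, e⟩

/-- The approximation property, in terms of the β-function data. -/
def AB (f : X → X → Prop) (a d b : X) : Prop :=
  ∀ i u v x y, i + 1 < b → BetaC a d i u → BetaC a d (i + 1) v → x ≤ u → f x y → y ≤ v

theorem PAm.approx_iff (h : PAm X) (hD : Div X) (f : X → X → Prop) (b : X) :
    (∃ s, IsApprox f s b) ↔ ∃ a d, AB f a d b := by
  constructor
  · rintro ⟨s, h1, h2⟩
    rcases h.zero_le b with hb | hb
    · obtain ⟨v, a, d, hp, -⟩ := h1 0 hb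
      exact ⟨a, d, fun i u v x y hi hu hv hx hf =>
        h2 i u v x y hi ⟨a, d, hp, hu⟩ ⟨a, d, hp, hv⟩ hx hf⟩
    · refine ⟨0, 0, fun i u v x y hi => ?_⟩
      subst hb
      exfalso
      rcases h.zero_le (i + 1) with h3 | h3
      · exact h.lt_irrefl _ (h.lt_trans _ _ _ h3 hi)
      · rw [← h3] at hi
        exact h.lt_irrefl _ hi
  · rintro ⟨a, d, hA⟩
    obtain ⟨s, hs⟩ := h.pair_ex hD a d
    refine ⟨s, fun i _ => ?_, ?_⟩
    · obtain ⟨v, hv⟩ := PAm.beta_ex hD a d i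
      exact ⟨v, a, d, hs, hv⟩
    · rintro i u v x y hi ⟨a1, d1, hp1, hu⟩ ⟨a2, d2, hp2, hv⟩ hx hf
      obtain ⟨rfl, rfl⟩ := h.pair hs hp1
      obtain ⟨rfl, rfl⟩ := h.pair hs hp2
      exact hA i u v x y hi hu hv hx hf

end Arith
end ArithFC

open FirstOrder Language
namespace ArithFC

/-! ### The base theory in both models, and induction -/

/-- The trivial theory. -/
def Tt : Th := fun _ _ => True

section Base

variable {M N : Type} [lang.Structure M] [lang.Structure N] {n : ℕ} {g : M → N}

theorem transfer3 (hel : SigmaElem M N (n + 1) g) {R : Rl (Fin 3)} (h : Df Tt false (n + 1) R)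
    (hR : ∀ v, R M v) (x y z : N) : R N ![x, y, z] :=
  transfer_all hel trivial trivial h le_rfl hR _

theorem PAm.transfer (hn : 1 ≤ n) (h : PAm M) (hel : SigmaElem M N (n + 1) g) : PAm N where
  add_assoc x y z := transfer3 hel
    (R := fun X _ v => v 0 + v 1 + v 2 = v 0 + (v 1 + v 2))
    (by repeat' first | exact Tm.var _ | apply Tm.add | apply Df.eq)
    (fun v => h.add_assoc _ _ _) x y z
  add_comm x y := transfer3 hel
    (R := fun X _ v => v 0 + v 1 = v 1 + v 0)
    (by repeat' first | exact Tm.var _ | apply Tm.add | apply Df.eq)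
    (fun v => h.add_comm _ _) x y y
  mul_assoc x y z := transfer3 hel
    (R := fun X _ v => v 0 * v 1 * v 2 = v 0 * (v 1 * v 2))
    (by repeat' first | exact Tm.var _ | apply Tm.mul | apply Df.eq)
    (fun v => h.mul_assoc _ _ _) x y z
  mul_comm x y := transfer3 hel
    (R := fun X _ v => v 0 * v 1 = v 1 * v 0)
    (by repeat' first | exact Tm.var _ | apply Tm.mul | apply Df.eq)
    (fun v => h.mul_comm _ _) x y y
  ldistrib x y z := transfer3 hel
    (R := fun X _ v => v 0 * (v 1 + v 2) = v 0 * v 1 + v 0 * v 2)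
    (by repeat' first | exact Tm.var _ | apply Tm.add | apply Tm.mul | apply Df.eq)
    (fun v => h.ldistrib _ _ _) x y z
  add_zero x := transfer3 hel
    (R := fun X _ v => v 0 + 0 = v 0)
    (by repeat' first | exact Tm.var _ | exact Tm.zero | apply Tm.add | apply Df.eq)
    (fun v => h.add_zero _) x x x
  mul_zero x := transfer3 hel
    (R := fun X _ v => v 0 * 0 = 0)
    (by repeat' first | exact Tm.var _ | exact Tm.zero | apply Tm.mul | apply Df.eq)
    (fun v => h.mul_zero _) x x x
  mul_one x := transfer3 hel
    (R := fun X _ v => v 0 * 1 = v 0)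
    (by repeat' first | exact Tm.var _ | exact Tm.one | apply Tm.mul | apply Df.eq)
    (fun v => h.mul_one _) x x x
  lt_trans x y z := transfer3 hel
    (R := fun X _ v => v 0 < v 1 → v 1 < v 2 → v 0 < v 2)
    (by repeat' first | exact Tm.var _ | apply Df.imp | apply Df.lt)
    (fun v => h.lt_trans _ _ _) x y z
  lt_irrefl x := transfer3 hel
    (R := fun X _ v => ¬ v 0 < v 0)
    (by repeat' first | exact Tm.var _ | apply Df.not | apply Df.lt)
    (fun v => h.lt_irrefl _) x x x
  lt_total x y := transfer3 hel
    (R := fun X _ v => v 0 < v 1 ∨ v 0 = v 1 ∨ v 1 < v 0)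
    (by repeat' first | exact Tm.var _ | apply Df.or | apply Df.lt | apply Df.eq)
    (fun v => h.lt_total _ _) x y y
  add_lt_add x y z := transfer3 hel
    (R := fun X _ v => v 0 < v 1 → v 0 + v 2 < v 1 + v 2)
    (by repeat' first | exact Tm.var _ | apply Df.imp | apply Df.lt | apply Tm.add)
    (fun v => h.add_lt_add _ _ _) x y z
  mul_lt_mul x y z := transfer3 hel
    (R := fun X _ v => v 0 < v 1 → 0 < v 2 → v 0 * v 2 < v 1 * v 2)
    (by repeat' first | exact Tm.var _ | exact Tm.zero | apply Df.imp | apply Df.lt | apply Tm.mul)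
    (fun v => h.mul_lt_mul _ _ _) x y z
  sub_exists x y := transfer3 hel
    (R := fun X _ v => v 0 < v 1 → ∃ z, v 0 + z = v 1)
    (by
      obtain ⟨k, rfl⟩ : ∃ k, n = k + 1 := ⟨n - 1, by omega⟩
      apply Df.imp
      · exact Df.lt (Tm.var _) (Tm.var _)
      · apply Df.lower
        apply Df.ex
        exact Df.eq (Tm.add (Tm.var _) (Tm.var _)) (Tm.var _))
    (fun v => h.sub_exists _ _) x y y
  zero_lt_one := transfer3 hel
    (R := fun X _ v => (0 : X) < 1)
    (by repeat' first | exact Tm.zero | exact Tm.one | apply Df.lt)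
    (fun v => h.zero_lt_one) 0 0 0
  discrete x := transfer3 hel
    (R := fun X _ v => 0 < v 0 → 1 ≤ v 0)
    (by repeat' first | exact Tm.var _ | exact Tm.zero | exact Tm.one | apply Df.imp | apply Df.lt | apply Df.le)
    (fun v => h.discrete _) x x x
  zero_le x := transfer3 hel
    (R := fun X _ v => 0 ≤ v 0)
    (by repeat' first | exact Tm.var _ | exact Tm.zero | apply Df.le)
    (fun v => h.zero_le _) x x x

/-- Induction for uniformly definable relations. -/
theorem ind {T : Th} (hT : T M) (hI : ISig n M) {m : ℕ} (hm : m ≤ n) {α : Type} [Finite α]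
    {R : Rl (Option α)} (hR : Df T true m R) (v : α → M)
    (h0 : R M (fun o => o.elim 0 v))
    (hs : ∀ x, R M (fun o => o.elim x v) → R M (fun o => o.elim (x + 1) v)) :
    ∀ x, R M (fun o => o.elim x v) := by
  obtain ⟨p, ⟨e⟩⟩ := Finite.exists_equiv_fin α
  obtain ⟨φ, hφ, eφ⟩ := (hR.le_level hm).comp (α := Fin 1 ⊕ Fin p)
    (f := fun o X _ w => w (o.elim (Sum.inl 0) (fun a => Sum.inr (e a)))) (fun c => Tm.var _)
  refine hI {x | R M (fun o => o.elim x v)} ⟨p, φ, v ∘ e.symm, hφ, fun w => ?_⟩ h0 hs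
  rw [← eφ M hT]
  apply iff_of_eq
  show R M _ = R M _
  congr 1
  funext o
  rcases o with _ | o <;> simp

/-- Definition by an explicit instance of `Df`. -/
theorem sigmaDef2_of {T : Th} (hT : T M) {m : ℕ} {α : Type} [Finite α]
    {R : Rl (Option (Option α))} (hR : Df T true m R) (v : α → M) :
    SigmaDef2 m M (fun x y => R M (fun o => o.elim y (fun o => o.elim x v))) := by
  obtain ⟨p, ⟨e⟩⟩ := Finite.exists_equiv_fin α
  obtain ⟨φ, hφ, eφ⟩ := hR.comp (α := Fin 2 ⊕ Fin p)
    (f := fun o X _ w => w (o.elim (Sum.inl 1)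
      (fun o => o.elim (Sum.inl 0) (fun a => Sum.inr (e a))))) (fun c => Tm.var _)
  refine ⟨p, φ, v ∘ e.symm, hφ, fun w => ?_⟩
  rw [← eφ M hT]
  apply iff_of_eq
  show R M _ = R M _
  congr 1
  funext o
  rcases o with _ | _ | o <;> simp

theorem Df.div : Df Tt true 1 (α := Fin 2)
    (fun X _ v => ∃ q x, x < v 1 + 1 ∧ v 0 = q * (v 1 + 1) + x) := by
  apply Df.ex
  apply Df.ex
  repeat' first | exact Tm.var _ | exact Tm.one | apply Tm.add | apply Tm.mul | apply Df.and | apply Df.lt | apply Df.eq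

theorem Div.of_ind (hn : 1 ≤ n) (h : PAm M) (hI : ISig n M) : Div M := by
  intro a d
  refine ind (T := Tt) trivial hI hn (α := Fin 1)
    (R := fun X _ w => ∃ q x, x < w (some 0) + 1 ∧ w none = q * (w (some 0) + 1) + x)
    (Df.div.comp (f := fun i X _ w => w (![none, some 0] i)) (fun c => Tm.var _)) ![d] ?_ ?_ a
  · refine ⟨0, 0, ?_, ?_⟩
    · exact h.lt_succ.2 (h.zero_le _)
    · show (0 : M) = 0 * (d + 1) + 0
      rw [h.mul_comm, h.mul_zero, h.add_zero]
  · rintro x ⟨q, r, hr, e⟩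
    let := h.semiring
    let := h.order
    have := h.ordered
    simp only [Option.elim] at e hr ⊢
    rcases h.lt_succ.1 hr with h1 | h1
    · refine ⟨q, r + 1, ?_, ?_⟩
      · exact h.add_lt_add _ _ _ h1
      · rw [e]
        exact ab_div_step q _ r
    · refine ⟨q + 1, 0, ?_, ?_⟩
      · exact h.lt_succ.2 (h.zero_le _)
      · rw [e, h1]
        exact ab_div_step' q _

theorem Div.transfer (hn : 1 ≤ n) (hM : Div M) (hel : SigmaElem M N (n + 1) g) : Div N := by
  intro a d
  exact transfer_all hel trivial trivial Df.div.lower (by omega : 2 ≤ n + 1)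
    (fun v => hM (v 0) (v 1)) ![a, d]

end Base
end ArithFC

open FirstOrder Language
namespace ArithFC

/-! ### Collection and bounded quantifiers -/

/-- Extending an assignment. -/
def cs {α X : Type} (z : X) (v : α → X) : Option α → X := fun o => o.elim z v

/-- Collection for Π_j formulas. -/
def Coll (j : ℕ) (X : Type) [lang.Structure X] : Prop :=
  ∀ (α : Type) [Finite α] (φ : lang.BoundedFormula (Option (Option α)) 0), PiFm j 0 φ →
    ∀ (v : α → X) (a : X), (∀ x, x < a → ∃ z, φ.Realize (cs z (cs x v)) finZeroElim) →
      ∃ b, ∀ x, x < a → ∃ z, z < b ∧ φ.Realize (cs z (cs x v)) finZeroElim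

/-- PA⁻ with collection for Π_i formulas, `i < j`. -/
def TC (j : ℕ) : Th := fun X _ => PAm X ∧ ∀ i, i < j → Coll i X

theorem TC.mono {j j' : ℕ} (h : j ≤ j') (X : Type) [lang.Structure X] (hX : TC j' X) : TC j X :=
  ⟨hX.1, fun i hi => hX.2 i (hi.trans_le h)⟩

theorem PAm.ub {X : Type} [lang.Structure X] (h : PAm X) (x y : X) : ∃ u, x < u ∧ y < u := by
  rcases h.lt_total x y with h1 | h1 | h1
  · exact ⟨y + 1, h.lt_succ.2 (Or.inl h1), h.lt_succ.2 (Or.inr rfl)⟩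
  · exact ⟨y + 1, h.lt_succ.2 (Or.inr h1), h.lt_succ.2 (Or.inr rfl)⟩
  · exact ⟨x + 1, h.lt_succ.2 (Or.inr rfl), h.lt_succ.2 (Or.inl h1)⟩

theorem Df.of_fm {T : Th} {b : Bool} {m n : ℕ} {α β : Type} {φ : lang.BoundedFormula α n}
    (h : Fm b m n φ) (s : α ⊕ Fin n → β) :
    Df T b m (α := β) (fun X _ w =>
      φ.Realize (fun a => w (s (Sum.inl a))) (fun i => w (s (Sum.inr i)))) := by
  obtain ⟨ψ, h', e⟩ := h.subst β 0 (fun a => Term.var (Sum.inl (s a)))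
  exact ⟨ψ, h', fun X _ _ v => (e X v finZeroElim).symm⟩

/-- Closure of Σ_j under bounded universal quantification. -/
def BallOK (j : ℕ) : Prop :=
  ∀ (α : Type) [Finite α] (P : ∀ (X : Type) [lang.Structure X], (α → X) → X → Prop)
    (f : ∀ (X : Type) [lang.Structure X], (α → X) → X), Tm f →
    Df (TC j) true j (fun X _ (w : Option α → X) => P X (fun a => w (some a)) (w none)) →
    Df (TC j) true j (fun X _ v => ∀ x, x < f X v → P X v x)

theorem BallOK.bex {j : ℕ} (hb : BallOK j) {α : Type} [Finite α]
    {P : ∀ (X : Type) [lang.Structure X], (α → X) → X → Prop}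
    {f : ∀ (X : Type) [lang.Structure X], (α → X) → X} (hf : Tm f)
    (h : Df (TC j) false j
      (fun X _ (w : Option α → X) => P X (fun a => w (some a)) (w none))) :
    Df (TC j) false j (fun X _ v => ∃ x, x < f X v ∧ P X v x) := by
  rw [Df.neg_iff]
  refine (hb α (fun X _ v x => ¬ P X v x) f hf ?_).iff fun X _ _ v => ?_
  · exact Df.not h
  · push Not
    rfl

theorem nf_pi {j n : ℕ} {α : Type} {φ : lang.BoundedFormula α n} (h : PiFm j n φ) :
    ∃ S : Rl (Option (α ⊕ Fin n)), Df (TC j) false j S ∧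
      ∀ (X : Type) [lang.Structure X], TC j X → ∀ (v : α → X) (xs : Fin n → X),
        φ.Realize v xs ↔ ∃ z, S X (cs z (Sum.elim v xs)) := by
  refine ⟨fun X _ w => φ.Realize (fun a => w (some (Sum.inl a))) (fun i => w (some (Sum.inr i))),
    Df.of_fm (b := false) h _, fun X _ hX v xs => ?_⟩
  simp only [cs, Option.elim]
  exact ⟨fun h => ⟨0, h⟩, fun ⟨_, h⟩ => h⟩

theorem nf_aux {j : ℕ} (hb : BallOK j) {α : Type} [Finite α] :
    ∀ (m n : ℕ) (φ : lang.BoundedFormula α n), SigmaFm m n φ → m = j + 1 →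
    ∃ S : Rl (Option (α ⊕ Fin n)), Df (TC j) false j S ∧
      ∀ (X : Type) [lang.Structure X], TC j X → ∀ (v : α → X) (xs : Fin n → X),
        φ.Realize v xs ↔ ∃ z, S X (cs z (Sum.elim v xs))
  | _, _, _, .delta0 m n h => fun _ => nf_pi (.delta0 j n h)
  | _, _, _, .ofPi m n h => fun hm => by
      obtain rfl : m = j := by omega
      exact nf_pi h
  | _, _, _, .ex m n h => fun hm => by
      obtain ⟨S, hS, e⟩ := nf_aux hb _ _ _ h hm
      have h1 : Df (TC j) false j (α := Option (α ⊕ Fin n)) (fun X _ w => ∃ y, y < w none ∧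
          ∃ z, z < w none ∧ S X (cs z (Sum.elim (fun a => w (some (Sum.inl a)))
            (Fin.snoc (fun i => w (some (Sum.inr i))) y)))) := by
        apply hb.bex (Tm.var none)
        apply hb.bex (Tm.var (some none))
        refine (hS.comp (f := fun o X _ w => w (o.elim none (fun a => Sum.elim
          (fun a => some (some (some (Sum.inl a))))
          (Fin.snoc (fun i => some (some (some (Sum.inr i)))) (some none)) a)))
          (fun c => Tm.var _)).iff fun X _ _ w => ?_
        apply iff_of_eq
        show S X _ = S X _
        congr 1
        funext o
        rcases o with _ | a | i
        · rfl
        · rfl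
        · refine Fin.lastCases ?_ (fun i => ?_) i <;> simp [cs]
      refine ⟨_, h1, fun X _ hX v xs => ?_⟩
      rw [BoundedFormula.realize_ex]
      simp only [e X hX]
      constructor
      · rintro ⟨y, z, h⟩
        obtain ⟨u, h2, h3⟩ := hX.1.ub y z
        exact ⟨u, y, h2, z, h3, h⟩
      · rintro ⟨u, y, -, z, -, h⟩
        exact ⟨y, z, h⟩

/-- Normal form for Σ_{j+1} relations. -/
theorem BallOK.nf {j : ℕ} (hb : BallOK j) {α : Type} [Finite α] {T : Th}
    (hT : ∀ (X : Type) [lang.Structure X], T X → TC j X) {R : Rl α} (h : Df T true (j + 1) R) :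
    ∃ S : Rl (Option α), Df (TC j) false j S ∧
      ∀ (X : Type) [lang.Structure X], T X → ∀ (v : α → X), R X v ↔ ∃ z, S X (cs z v) := by
  obtain ⟨φ, h, e⟩ := h
  obtain ⟨S, hS, e'⟩ := nf_aux hb _ _ _ h rfl
  refine ⟨_, hS.comp (f := fun o X _ w => w (o.elim none
    (fun a => Sum.elim (fun a => some a) Fin.elim0 a))) (fun c => Tm.var _), fun X _ hX v => ?_⟩
  rw [e X hX, e' X (hT X hX)]
  refine exists_congr fun z => ?_
  apply iff_of_eq
  show S X _ = S X _
  congr 1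
  funext o
  rcases o with _ | a | i
  · rfl
  · rfl
  · exact i.elim0

/-- Collection, for relations. -/
theorem Coll.rel {j : ℕ} {X : Type} [lang.Structure X] (hc : Coll j X) {α : Type} [Finite α]
    {T : Th} (hT : T X) {S : Rl (Option (Option α))} (hS : Df T false j S) (v : α → X) (a : X)
    (h : ∀ x, x < a → ∃ z, S X (cs z (cs x v))) :
    ∃ b, ∀ x, x < a → ∃ z, z < b ∧ S X (cs z (cs x v)) := by
  obtain ⟨φ, hφ, e⟩ := hS
  simp only [e X hT] at h ⊢
  exact hc α φ hφ v a h

/-- The bounded form of a Σ-relation. -/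
theorem BallOK.bb {j : ℕ} (hb : BallOK j) {α : Type} [Finite α]
    {S : Rl (Option (Option α))} (hS : Df (TC j) false j S)
    {f : ∀ (X : Type) [lang.Structure X], (α → X) → X} (hf : Tm f) :
    Df (TC j) true (j + 1) (fun X _ v => ∃ b, ∀ x, x < f X v → ∃ z, z < b ∧ S X (cs z (cs x v))) := by
  apply Df.ex
  apply Df.lower
  refine Df.ballPi (f := fun X _ w => f X (fun a => w (some a))) ?_ ?_
  · obtain ⟨t, ht⟩ := hf
    refine ⟨t.relabel some, fun X _ v => ?_⟩
    beta_reduce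
    rw [ht, Term.realize_relabel]
    rfl
  · apply hb.bex (Tm.var (some none))
    refine (hS.comp (f := fun o X _ w => w (o.elim none (fun o => o.elim (some none)
      (fun a => some (some (some a)))))) (fun c => Tm.var _)).iff fun X _ _ w => ?_
    apply iff_of_eq
    show S X _ = S X _
    congr 1
    funext o
    rcases o with _ | _ | a <;> rfl

theorem ballOK : ∀ j : ℕ, BallOK j
  | 0 => fun α _ P f hf h => Df.ball0 hf h
  | j + 1 => fun α _ P f hf h => by
      have hb := ballOK j
      obtain ⟨S, hS, e⟩ := hb.nf (fun X _ hX => TC.mono (Nat.le_succ j) X hX) h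
      refine ((hb.bb hS hf).mono (fun X _ hX => TC.mono (Nat.le_succ j) X hX)).iff
        fun X _ hX v => ?_
      have e' : ∀ x, P X v x ↔ ∃ z, S X (cs z (cs x v)) := fun x => e X hX (cs x v)
      simp only [e']
      constructor
      · exact (hX.2 j (Nat.lt_succ_self j)).rel (TC.mono (Nat.le_succ j) X hX) hS v _
      · rintro ⟨b, h⟩ x hx
        obtain ⟨z, -, h⟩ := h x hx
        exact ⟨z, h⟩

section CollModels

variable {M N : Type} [lang.Structure M] [lang.Structure N] {n : ℕ} {g : M → N}

theorem coll_of_ind {j : ℕ} (hj : j + 1 ≤ n) (hT : TC j M) (hI : ISig n M) : Coll j M := by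
  intro α _ φ hφ v a h
  have hS : Df (TC j) false j (fun X _ w => φ.Realize w finZeroElim) :=
    ⟨φ, hφ, fun X _ _ _ => Iff.rfl⟩
  have hP := hT.1
  have h1 : Df (TC j) true (j + 1) (α := Option (Option α))
      (fun X _ w => w (some none) < w none ∨ ∃ b, ∀ x, x < w none → ∃ z, z < b ∧
        φ.Realize (cs z (cs x (fun a => w (some (some a))))) finZeroElim) := by
    apply Df.or (Df.lt (Tm.var _) (Tm.var _))
    refine ((ballOK j).bb (hS.comp (f := fun o X _ w => w (o.elim none (fun o => o.elim (some none)
      (fun a => some (some (some (some a))))))) (fun c => Tm.var _)) (Tm.var none)).iff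
      fun X _ _ w => ?_
    refine or_iff_right_of_imp (fun h => False.elim h) |>.symm.trans ?_
    rw [false_or]
    refine exists_congr fun b => forall_congr' fun x => imp_congr Iff.rfl <|
      exists_congr fun z => and_congr Iff.rfl ?_
    apply iff_of_eq
    congr 1
    funext o
    rcases o with _ | _ | o <;> rfl
  have h2 := ind hT hI hj h1 (cs a v) ?_ ?_ a
  · rcases h2 with h2 | h2
    · exact absurd h2 (hP.lt_irrefl _)
    · exact h2
  · refine Or.inr ⟨0, fun x hx => ?_⟩
    rcases hP.zero_le x with h3 | h3
    · exact absurd (hP.lt_trans _ _ _ hx h3) (hP.lt_irrefl _)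
    · rw [← h3] at hx
      exact absurd hx (hP.lt_irrefl _)
  · rintro c (h3 | ⟨b, h3⟩)
    · exact Or.inl (hP.lt_succ.2 (Or.inl h3))
    · rcases hP.lt_total c a with h4 | h4 | h4
      · right
        obtain ⟨z, hz⟩ := h c h4
        obtain ⟨u, hu1, hu2⟩ := hP.ub b z
        refine ⟨u, fun x hx => ?_⟩
        rcases hP.lt_succ.1 hx with h5 | h5
        · obtain ⟨z', h6, h7⟩ := h3 x h5
          exact ⟨z', hP.lt_trans _ _ _ h6 hu1, h7⟩
        · obtain rfl : x = c := h5
          exact ⟨z, hu2, hz⟩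
      · exact Or.inl (hP.lt_succ.2 (Or.inr h4.symm))
      · exact Or.inl (hP.lt_succ.2 (Or.inl h4))

theorem coll_transfer {j : ℕ} (hj : j + 3 ≤ n + 1) (hM : TC j M) (hN : TC j N) (hc : Coll j M)
    (hel : SigmaElem M N (n + 1) g) : Coll j N := by
  intro α _ φ hφ v a h
  have hS : Df (TC j) false j (fun X _ w => φ.Realize w finZeroElim) :=
    ⟨φ, hφ, fun X _ _ _ => Iff.rfl⟩
  have h1 : Df (TC j) true (j + 1) (α := Option α)
      (fun X _ w => ∃ b, ∀ x, x < w none → ∃ z, z < b ∧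
        φ.Realize (cs z (cs x (fun a => w (some a)))) finZeroElim) := by
    refine ((ballOK j).bb (hS.comp (f := fun o X _ w => w (o.elim none (fun o => o.elim (some none)
      (fun a => some (some (some a)))))) (fun c => Tm.var _)) (Tm.var none)).iff
      fun X _ _ w => ?_
    refine exists_congr fun b => forall_congr' fun x => imp_congr Iff.rfl <|
      exists_congr fun z => and_congr Iff.rfl ?_
    apply iff_of_eq
    congr 1
    funext o
    rcases o with _ | _ | o <;> rfl
  have h2 : Df (TC j) true (j + 2) (α := Option α)
      (fun X _ w => ∃ x, x < w none ∧ ∀ z,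
        ¬ φ.Realize (cs z (cs x (fun a => w (some a)))) finZeroElim) := by
    apply Df.ex
    apply Df.and (Df.lt (Tm.var _) (Tm.var _))
    apply Df.lower
    apply Df.all
    apply Df.lower
    apply Df.not
    refine (hS.comp (f := fun o X _ w => w (o.elim none (fun o => o.elim (some none)
      (fun a => some (some (some a)))))) (fun c => Tm.var _)).iff fun X _ _ w => ?_
    apply iff_of_eq
    beta_reduce
    congr 1
    funext o
    rcases o with _ | _ | o <;> rfl
  have h3 := transfer_all hel hM hN (h2.or h1.succ).lower hj ?_ (cs a v)
  · rcases h3 with ⟨x, hx, h3⟩ | h3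
    · obtain ⟨z, hz⟩ := h x hx
      exact absurd hz (h3 z)
    · exact h3
  · intro w
    by_cases hw : ∃ x, x < w none ∧ ∀ z,
        ¬ φ.Realize (cs z (cs x (fun a => w (some a)))) finZeroElim
    · exact Or.inl hw
    · right
      push Not at hw
      exact hc α φ hφ _ _ hw

theorem tc_M (hP : PAm M) (hI : ISig n M) : ∀ j, j ≤ n → TC j M
  | 0 => fun _ => ⟨hP, fun i hi => absurd hi (Nat.not_lt_zero i)⟩
  | j + 1 => fun hj => by
      have h := tc_M hP hI j (by omega)
      refine ⟨hP, fun i hi => ?_⟩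
      rcases Nat.lt_succ_iff_lt_or_eq.1 hi with h1 | rfl
      · exact h.2 i h1
      · exact coll_of_ind hj h hI

theorem tc_N (hP : PAm M) (hI : ISig n M) (hPN : PAm N) (hel : SigmaElem M N (n + 1) g) :
    ∀ j, j + 1 ≤ n → TC j N
  | 0 => fun _ => ⟨hPN, fun i hi => absurd hi (Nat.not_lt_zero i)⟩
  | j + 1 => fun hj => by
      have h := tc_N hP hI hPN hel j (by omega)
      refine ⟨hPN, fun i hi => ?_⟩
      rcases Nat.lt_succ_iff_lt_or_eq.1 hi with h1 | rfl
      · exact h.2 i h1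
      · exact coll_transfer (by omega) (tc_M hP hI i (by omega)) h
          ((tc_M hP hI (i + 1) (by omega)).2 i (by omega)) hel

end CollModels
end ArithFC

open FirstOrder Language
namespace ArithFC

/-! ### Curried relations -/

section Curried

variable {T : Th} {b : Bool} {m : ℕ} {α : Type}

theorem Df.comp3 {P : ∀ (X : Type) [lang.Structure X], X → X → X → Prop}
    (h : Df T b m (α := Fin 3) (fun X _ v => P X (v 0) (v 1) (v 2)))
    {f1 f2 f3 : ∀ (X : Type) [lang.Structure X], (α → X) → X}
    (h1 : Tm f1) (h2 : Tm f2) (h3 : Tm f3) :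
    Df T b m (fun X _ v => P X (f1 X v) (f2 X v) (f3 X v)) := by
  refine h.comp (f := fun i X _ v => ![f1 X v, f2 X v, f3 X v] i) (fun c => ?_)
  match c with
  | 0 => exact h1
  | 1 => exact h2
  | 2 => exact h3

theorem Df.comp4 {P : ∀ (X : Type) [lang.Structure X], X → X → X → X → Prop}
    (h : Df T b m (α := Fin 4) (fun X _ v => P X (v 0) (v 1) (v 2) (v 3)))
    {f1 f2 f3 f4 : ∀ (X : Type) [lang.Structure X], (α → X) → X}
    (h1 : Tm f1) (h2 : Tm f2) (h3 : Tm f3) (h4 : Tm f4) :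
    Df T b m (fun X _ v => P X (f1 X v) (f2 X v) (f3 X v) (f4 X v)) := by
  refine h.comp (f := fun i X _ v => ![f1 X v, f2 X v, f3 X v, f4 X v] i) (fun c => ?_)
  match c with
  | 0 => exact h1
  | 1 => exact h2
  | 2 => exact h3
  | 3 => exact h4

theorem Df.beta {f1 f2 f3 f4 : ∀ (X : Type) [lang.Structure X], (α → X) → X}
    (h1 : Tm f1) (h2 : Tm f2) (h3 : Tm f3) (h4 : Tm f4) :
    Df T true (m + 1) (fun X _ v => BetaC (f1 X v) (f2 X v) (f3 X v) (f4 X v)) := by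
  refine Df.comp4 (P := fun X _ => BetaC) ?_ h1 h2 h3 h4
  unfold BetaC
  apply Df.and
  · repeat' first | exact Tm.var _ | exact Tm.one | apply Tm.add | apply Tm.mul | apply Df.lt
  · apply Df.ex
    repeat' first | exact Tm.var _ | exact Tm.one | apply Tm.add | apply Tm.mul | apply Df.eq

/-- Definability of the approximation property. -/
theorem Df.ab {F : Rl (Option (Option α))} (hF : Df T true (m + 1) F) :
    Df T false (m + 1) (α := Option (Option (Option α))) (fun X _ w =>
      AB (fun x y => F X (cs y (cs x (fun c => w (some (some (some c)))))))
        (w none) (w (some none)) (w (some (some none)))) := by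
  unfold AB
  apply Df.all
  apply Df.all
  apply Df.all
  apply Df.all
  apply Df.all
  apply Df.imp
  · repeat' first | exact Tm.var _ | exact Tm.one | apply Tm.add | apply Df.lt
  apply Df.imp
  · exact Df.beta (Tm.var _) (Tm.var _) (Tm.var _) (Tm.var _)
  apply Df.imp
  · exact Df.beta (Tm.var _) (Tm.var _) (Tm.add (Tm.var _) Tm.one) (Tm.var _)
  apply Df.imp
  · exact Df.le (Tm.var _) (Tm.var _)
  apply Df.imp
  · refine (hF.comp (f := fun o X _ w => w (o.elim none (fun o => o.elim (some none) (fun c =>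
      some (some (some (some (some (some (some (some c))))))))))) (fun c => Tm.var _)).iff
      fun X _ _ w => ?_
    apply iff_of_eq
    show F X _ = F X _
    congr 1
    funext o
    rcases o with _ | _ | o <;> rfl
  · exact Df.le (Tm.var _) (Tm.var _)

theorem Df.partialFun {F : Rl (Option (Option α))} (hF : Df T true (m + 1) F) :
    Df T false (m + 1) (fun X _ w => IsPartialFun (fun x y => F X (cs y (cs x w)))) := by
  unfold IsPartialFun
  apply Df.all
  apply Df.all
  apply Df.all
  apply Df.imp
  · refine (hF.comp (f := fun o X _ w => w (o.elim (some none)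
      (fun o => o.elim (some (some none)) (fun c =>
      (some (some (some c))))))) (fun c => Tm.var _)).iff
      fun X _ _ w => ?_
    apply iff_of_eq
    show F X _ = F X _
    congr 1
    funext o
    rcases o with _ | _ | o <;> rfl
  apply Df.imp
  · refine (hF.comp (f := fun o X _ w => w (o.elim none
      (fun o => o.elim (some (some none)) (fun c =>
      (some (some (some c))))))) (fun c => Tm.var _)).iff
      fun X _ _ w => ?_
    apply iff_of_eq
    show F X _ = F X _
    congr 1
    funext o
    rcases o with _ | _ | o <;> rfl
  · exact Df.eq (Tm.var _) (Tm.var _)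

theorem comp_cs {M N : Type} (g : M → N) (x : M) (v : α → M) : g ∘ cs x v = cs (g x) (g ∘ v) := by
  funext o
  rcases o with _ | o <;> rfl

end Curried

/-! ### From the extension down to the base model -/

section Down

variable {M N : Type} [lang.Structure M] [lang.Structure N] {k : ℕ} {g : M → N}

theorem psig_down (hM : PAm M) (hDM : Div M) (hN : PAm N) (hDN : Div N)
    (hel : SigmaElem M N (k + 2) g) (h : PSig (k + 1) N) : PSig (k + 1) M := by
  rintro f ⟨p, φ, w, hφ, e⟩ hf b
  have hR : Df Tt true (k + 1) (α := Option (Option (Fin p))) (fun X _ u =>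
      φ.Realize (fun a => u (Sum.elim ![some none, none] (fun i => some (some i)) a))
        (fun i => i.elim0)) := by
    refine (Df.of_fm (b := true) hφ (fun a => Sum.elim
      (fun a => Sum.elim ![some none, none] (fun i => some (some i)) a) Fin.elim0 a)).iff
      fun X _ _ w => ?_
    apply iff_of_eq
    show BoundedFormula.Realize _ _ _ = BoundedFormula.Realize _ _ _
    congr 1
    exact fin0 _ _
  generalize hRd : (fun (X : Type) [lang.Structure X] (u : Option (Option (Fin p)) → X) =>
      φ.Realize (fun a => u (Sum.elim ![some none, none] (fun i => some (some i)) a))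
        (fun i => i.elim0)) = R at hR
  have hfR : f = fun x y => R M (cs y (cs x w)) := by
    funext x y
    subst hRd
    apply propext
    refine (e ![x, y]).trans ?_
    apply iff_of_eq
    congr 1
    · funext s
      rcases s with s | s
      · match s with
        | 0 => rfl
        | 1 => rfl
      · rfl
  subst hfR
  have hpf : IsPartialFun (fun x y => R N (cs y (cs x (g ∘ w)))) :=
    (transfer hel trivial trivial hR.partialFun (by omega) w).1 hf
  have hap := h _ (sigmaDef2_of (T := Tt) trivial hR (g ∘ w)) hpf (g b)
  rw [hM.approx_iff hDM]
  rw [hN.approx_iff hDN] at hap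
  have hex : Df Tt true (k + 2) (α := Option (Fin p)) (fun X _ u =>
      ∃ d a, AB (fun x y => R X (cs y (cs x (fun c => u (some c))))) a d (u none)) := by
    apply Df.ex
    apply Df.ex
    exact hR.ab.lower
  obtain ⟨a, d, hap⟩ := hap
  have hh := (transfer hel trivial trivial hex le_rfl (cs b w)).2
    (by rw [comp_cs]; exact ⟨d, a, hap⟩)
  obtain ⟨d, a, hh⟩ := hh
  exact ⟨a, d, hh⟩

end Down
end ArithFC

open FirstOrder Language
namespace ArithFC

/-! ### From the base model up to the extension -/

/-- Replacing finitely many parameters by one. -/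
theorem code_params {T : Th} {m : ℕ} : ∀ (p : ℕ) (β : Type) (R : Rl (β ⊕ Fin p)),
    Df T true (m + 1) R → ∃ R' : Rl (Option β), Df T true (m + 1) R' ∧
      ∀ (X : Type) [lang.Structure X], PAm X → Div X → ∀ w : Fin p → X, ∃ e, ∀ v : β → X,
        R X (Sum.elim v w) ↔ R' X (cs e v)
  | 0, β, R, hR => by
      refine ⟨_, hR.comp (f := fun c X _ w => w (Sum.elim some Fin.elim0 c)) (fun c => Tm.var _),
        fun X _ _ _ w => ⟨0, fun v => ?_⟩⟩
      apply iff_of_eq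
      show R X _ = R X _
      congr 1
      funext c
      rcases c with c | c
      · rfl
      · exact c.elim0
  | p + 1, β, R, hR => by
      obtain ⟨R1, hR1, e1⟩ := code_params p (Option β) _
        (hR.comp (f := fun c X _ w => w (Sum.elim (fun b => Sum.inl (some b))
          (Fin.cons (Sum.inl none) (fun i => Sum.inr i)) c)) (fun c => Tm.var _))
      refine ⟨fun X _ u => ∃ w0 e', IsPairC (u none) w0 e' ∧
        R1 X (cs e' (cs w0 (fun b => u (some b)))), ?_, fun X _ hP hD w => ?_⟩
      · apply Df.ex
        apply Df.ex
        apply Df.and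
        · unfold IsPairC
          repeat' first | exact Tm.var _ | exact Tm.one | apply Tm.add | apply Tm.mul | apply Df.eq
        · refine (hR1.comp (f := fun o X _ w => w (o.elim none (fun o => o.elim (some none)
            (fun a => some (some (some a)))))) (fun c => Tm.var _)).iff fun X _ _ w => ?_
          apply iff_of_eq
          show R1 X _ = R1 X _
          congr 1
          funext o
          rcases o with _ | _ | o <;> rfl
      · obtain ⟨e', he'⟩ := e1 X hP hD (Fin.tail w)
        obtain ⟨e, he⟩ := hP.pair_ex hD (w 0) e'
        refine ⟨e, fun v => ?_⟩
        have h1 := he' (cs (w 0) v)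
        have h2 : R X (Sum.elim v w) ↔ R1 X (cs e' (cs (w 0) v)) := by
          rw [← h1]
          apply iff_of_eq
          show R X _ = R X _
          congr 1
          funext c
          rcases c with c | c
          · rfl
          · refine Fin.cases ?_ (fun i => ?_) c
            · rfl
            · simp [Fin.tail]
        rw [h2]
        constructor
        · intro h
          exact ⟨w 0, e', he, h⟩
        · rintro ⟨w0, e'', h3, h4⟩
          obtain ⟨rfl, rfl⟩ := hP.pair he h3
          exact h4

/-- A Σ_{k+1} relation in normal form. -/
structure NFm (k : ℕ) (F : ∀ (X : Type) [lang.Structure X], X → X → X → Prop)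
    (S : ∀ (X : Type) [lang.Structure X], X → X → X → X → Prop) : Prop where
  hF : Df (TC k) true (k + 1) (α := Fin 3) (fun X _ v => F X (v 0) (v 1) (v 2))
  hS : Df (TC k) false k (α := Fin 4) (fun X _ v => S X (v 0) (v 1) (v 2) (v 3))
  hFS : ∀ (X : Type) [lang.Structure X], TC k X → ∀ x y p, F X x y p ↔ ∃ z, S X x y p z

theorem nfm_ex {N : Type} [lang.Structure N] {k : ℕ} (hP : PAm N) (hD : Div N)
    {f : N → N → Prop} (hf : SigmaDef2 (k + 1) N f) :
    ∃ F S, NFm k F S ∧ ∃ e : N, ∀ x y, f x y ↔ F N x y e := by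
  obtain ⟨p, φ, w, hφ, e⟩ := hf
  have hR : Df (TC k) true (k + 1) (fun X _ u => φ.Realize u finZeroElim) :=
    ⟨φ, hφ, fun X _ _ _ => Iff.rfl⟩
  obtain ⟨R', hR', e'⟩ := code_params p (Fin 2) _ hR
  obtain ⟨S, hS, eS⟩ := (ballOK k).nf (fun X _ h => h) hR'
  obtain ⟨c, hc⟩ := e' N hP hD w
  refine ⟨fun X _ x y p => R' X (cs p ![x, y]), fun X _ x y p z => S X (cs z (cs p ![x, y])),
    ⟨?_, ?_, fun X _ hX x y p => eS X hX _⟩, c, fun x y => ?_⟩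
  · refine (hR'.comp (f := fun o X _ w => w (o.elim 2 ![0, 1])) (fun c => Tm.var _)).iff
      fun X _ _ w => ?_
    apply iff_of_eq
    show R' X _ = R' X _
    congr 1
    funext o
    match o with
    | none => rfl
    | some 0 => rfl
    | some 1 => rfl
  · refine (hS.comp (f := fun o X _ w => w (o.elim 3 (fun o => o.elim 2 ![0, 1])))
      (fun c => Tm.var _)).iff fun X _ _ w => ?_
    apply iff_of_eq
    show S X _ = S X _
    congr 1
    funext o
    match o with
    | none => rfl
    | some none => rfl
    | some (some 0) => rfl
    | some (some 1) => rfl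
  · exact (e ![x, y]).trans (hc _)

/-- Some witness lies below `w`. -/
def Tht (S : ∀ (X : Type) [lang.Structure X], X → X → X → X → Prop) (X : Type)
    [lang.Structure X] (x w p : X) : Prop := ∃ y, y < w ∧ ∃ z, z < w ∧ S X x y p z

/-- `w` is the least bound for a witness. -/
def Psi (S : ∀ (X : Type) [lang.Structure X], X → X → X → X → Prop) (X : Type)
    [lang.Structure X] (x w p : X) : Prop :=
  ∃ w', w = w' + 1 ∧ ¬ Tht S X x w' p ∧ Tht S X x w p

section Up

variable {M N : Type} [lang.Structure M] [lang.Structure N] {k : ℕ} {g : M → N}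
  {F : ∀ (X : Type) [lang.Structure X], X → X → X → Prop}
  {S : ∀ (X : Type) [lang.Structure X], X → X → X → X → Prop}

theorem NFm.tht (h : NFm k F S) :
    Df (TC k) false k (α := Fin 3) (fun X _ v => Tht S X (v 0) (v 1) (v 2)) := by
  unfold Tht
  refine (ballOK k).bex (Tm.var 1) ?_
  refine (ballOK k).bex (Tm.var (some 1)) ?_
  exact Df.comp4 h.hS (Tm.var _) (Tm.var _) (Tm.var _) (Tm.var _)

theorem NFm.psi (h : NFm k F S) :
    Df (TC k) true (k + 1) (α := Fin 3) (fun X _ v => Psi S X (v 0) (v 1) (v 2)) := by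
  unfold Psi
  apply Df.ex
  apply Df.and
  · exact Df.eq (Tm.var _) (Tm.add (Tm.var _) Tm.one)
  apply Df.and
  · apply Df.succ
    apply Df.not
    exact Df.comp3 h.tht (Tm.var _) (Tm.var _) (Tm.var _)
  · apply Df.lower
    exact Df.comp3 h.tht (Tm.var _) (Tm.var _) (Tm.var _)

theorem Tht.mono {X : Type} [lang.Structure X] (hX : PAm X) {x w w' p : X} (h : Tht S X x w p)
    (hw : w ≤ w') : Tht S X x w' p := by
  obtain ⟨y, hy, z, hz, h⟩ := h
  let := hX.order
  exact ⟨y, lt_of_lt_of_le hy hw, z, lt_of_lt_of_le hz hw, h⟩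

theorem Psi.unique {X : Type} [lang.Structure X] (hX : PAm X) {x w v p : X} (h : Psi S X x w p)
    (h' : Psi S X x v p) : w = v := by
  have key : ∀ w v, Psi S X x w p → Psi S X x v p → ¬ w < v := by
    rintro w v ⟨w', -, -, h1⟩ ⟨v', rfl, h2, -⟩ hlt
    exact h2 (h1.mono hX (hX.lt_succ.1 hlt))
  rcases hX.lt_total w v with h1 | h1 | h1
  · exact absurd h1 (key _ _ h h')
  · exact h1
  · exact absurd h1 (key _ _ h' h)

theorem NFm.psi_ex (h : NFm k F S) (hT : TC k M) (hI : ISig (k + 1) M) (x y p : M)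
    (hF : F M x y p) : ∃ w, Psi S M x w p := by
  by_contra hc
  obtain ⟨z, hz⟩ := (h.hFS M hT x y p).1 hF
  obtain ⟨u, hu1, hu2⟩ := hT.1.ub y z
  have h1 : Df (TC k) true k (α := Option (Fin 2))
      (fun X _ w => ¬ Tht S X (w (some 0)) (w none) (w (some 1))) :=
    Df.not (Df.comp3 h.tht (Tm.var _) (Tm.var _) (Tm.var _))
  refine ind hT hI (Nat.le_succ k) h1 ![x, p] ?_ ?_ u ⟨y, hu1, z, hu2, hz⟩
  · rintro ⟨y, hy, -⟩
    have hy : y < (0 : M) := hy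
    rcases hT.1.zero_le y with h3 | h3
    · exact absurd (hT.1.lt_trans _ _ _ hy h3) (hT.1.lt_irrefl _)
    · rw [← h3] at hy
      exact absurd hy (hT.1.lt_irrefl _)
  · intro w hw hw'
    exact hc ⟨w + 1, w, rfl, hw, hw'⟩

theorem NFm.psi_ex_N (h : NFm k F S) (hT : TC k M) (hTN : TC k N) (hI : ISig (k + 1) M)
    (hel : SigmaElem M N (k + 2) g) (x y p : N)
    (hF : F N x y p) : ∃ w, Psi S N x w p := by
  have h1 : Df (TC k) false (k + 2) (α := Fin 3)
      (fun X _ v => F X (v 0) (v 1) (v 2) → ∃ w, Psi S X (v 0) w (v 2)) := by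
    apply Df.imp
    · exact h.hF.succ
    · apply Df.lower
      apply Df.ex
      exact Df.comp3 h.psi (Tm.var _) (Tm.var _) (Tm.var _)
  exact transfer_all hel hT hTN h1 le_rfl (fun v => h.psi_ex hT hI _ _ _) ![x, y, p] hF

/-- The pairing polynomial (twice the Cantor pair). -/
def Apol {X : Type} [lang.Structure X] (x p : X) : X := (x + p) * (x + p + 1) + (p + p)

/-- The auxiliary partial function, alternately stretching and evaluating. -/
def Gfun (S : ∀ (X : Type) [lang.Structure X], X → X → X → X → Prop) (X : Type)
    [lang.Structure X] (c u v : X) : Prop :=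
  (∃ h, u = h + h ∧ v = Apol (h + h + 1) c + Apol (h + h + 1) c + 1) ∨
    ∃ x p, u = Apol x p + Apol x p + 1 ∧ Psi S X x v p

theorem NFm.gfun (h : NFm k F S) :
    Df (TC k) true (k + 1) (α := Fin 3) (fun X _ v => Gfun S X (v 0) (v 1) (v 2)) := by
  unfold Gfun Apol
  apply Df.or
  · apply Df.ex
    apply Df.and
    · repeat' first | exact Tm.var _ | apply Tm.add | apply Df.eq
    · repeat' first | exact Tm.var _ | exact Tm.one | apply Tm.add | apply Tm.mul | apply Df.eq
  · apply Df.ex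
    apply Df.ex
    apply Df.and
    · repeat' first | exact Tm.var _ | exact Tm.one | apply Tm.add | apply Tm.mul | apply Df.eq
    · exact Df.comp3 h.psi (Tm.var _) (Tm.var _) (Tm.var _)

theorem Gfun.partialFun (hP : PAm M) (c : M) : IsPartialFun (Gfun S M c) := by
  let := hP.semiring
  let := hP.order
  have := hP.ordered
  intro u v v' h1 h2
  rcases h1 with ⟨h, rfl, rfl⟩ | ⟨x, p, rfl, h1⟩
  · rcases h2 with ⟨h', e, rfl⟩ | ⟨x', p', e, h2⟩
    · rw [ab_double_inj (R := M) e]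
    · exact absurd e (ab_even_odd (R := M) hP.succ_le)
  · rcases h2 with ⟨h', e, rfl⟩ | ⟨x', p', e, h2⟩
    · exact absurd e.symm (ab_even_odd (R := M) hP.succ_le)
    · have e1 := ab_double_inj (R := M) (add_right_cancel (G := M) e)
      obtain ⟨rfl, rfl⟩ := ab_pair (R := M) hP.zero_le hP.succ_le e1
      exact h1.unique hP h2

theorem beta_double (hP : PAm M) {a d i u : M} (h : BetaC a (d + d) i u) :
    BetaC a d (i + i + 1) u := by
  let := hP.semiring
  let := hP.order
  have := hP.ordered
  have e : (i + 1) * (d + d) + 1 = (i + i + 1 + 1) * d + 1 := ab_beta i d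
  unfold BetaC at h ⊢
  rwa [e] at h

theorem half (hP : PAm M) (hD : Div M) (u : M) : ∃ h, h + h ≤ u ∧ u ≤ h + h + 1 := by
  let := hP.semiring
  let := hP.order
  have := hP.ordered
  have e : ∀ q : M, q * (1 + 1) = q + q := fun q => by
    rw [hP.ldistrib, hP.mul_one]
  rcases hP.parity hD u with ⟨q, rfl⟩ | ⟨q, rfl⟩
  · rw [e]
    exact ⟨q, Or.inr rfl, hP.lt_succ.2 (Or.inr rfl) |>.le⟩
  · rw [e]
    exact ⟨q, (hP.lt_succ.2 (Or.inr rfl)).le, Or.inr rfl⟩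

/-- The property transferred to the extension. -/
def Bnd (S : ∀ (X : Type) [lang.Structure X], X → X → X → X → Prop) (X : Type)
    [lang.Structure X] (a d b c : X) : Prop :=
  ∀ i u v x w p, i + 1 < b → BetaC a d i u → BetaC a d (i + 1) v → x ≤ u → p ≤ c →
    Psi S X x w p → w ≤ v

theorem NFm.bnd (h : NFm k F S) :
    Df (TC k) false (k + 1) (α := Fin 4) (fun X _ v => Bnd S X (v 0) (v 1) (v 2) (v 3)) := by
  unfold Bnd
  apply Df.all
  apply Df.all
  apply Df.all
  apply Df.all
  apply Df.all
  apply Df.all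
  apply Df.imp
  · repeat' first | exact Tm.var _ | exact Tm.one | apply Tm.add | apply Df.lt
  apply Df.imp
  · exact Df.beta (Tm.var _) (Tm.var _) (Tm.var _) (Tm.var _)
  apply Df.imp
  · exact Df.beta (Tm.var _) (Tm.var _) (Tm.add (Tm.var _) Tm.one) (Tm.var _)
  apply Df.imp
  · exact Df.le (Tm.var _) (Tm.var _)
  apply Df.imp
  · exact Df.le (Tm.var _) (Tm.var _)
  apply Df.imp
  · exact Df.comp3 h.psi (Tm.var _) (Tm.var _) (Tm.var _)
  · exact Df.le (Tm.var _) (Tm.var _)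

theorem bnd_of_ab (hP : PAm M) (hD : Div M) {a d b c : M} (h : AB (Gfun S M c) a d (b + b)) :
    Bnd S M a (d + d) b c := by
  let := hP.semiring
  let := hP.order
  have := hP.ordered
  intro i u v x w p hi hu hv hx hp hw
  have hu' := beta_double hP hu
  have hv' := beta_double hP hv
  have e : (i + 1) + (i + 1) + 1 = i + i + 1 + 1 + 1 := by ring
  rw [e] at hv'
  have hi' : i + i + 1 + 1 + 1 < b + b := ab_idx (R := M) hP.succ_le hi
  obtain ⟨t, ht⟩ := PAm.beta_ex hD a d (i + i + 1 + 1)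
  obtain ⟨q, hq1, hq2⟩ := half hP hD u
  have h1 := h _ _ _ _ _ ((lt_add_one _).trans hi') hu' ht hq1 (Or.inl ⟨q, rfl, rfl⟩)
  have h2 : Apol x p + Apol x p + 1 ≤ t :=
    le_trans (ab_stretch (R := M) hP.zero_le (le_trans hx hq2) hp) h1
  exact h _ _ _ _ _ hi' ht hv' h2 (Or.inr ⟨x, p, rfl, hw⟩)

theorem psig_up (hM : PAm M) (hDM : Div M) (hN : PAm N) (hDN : Div N) (hI : ISig (k + 1) M)
    (hT : TC k M) (hTN : TC k N)
    (hel : SigmaElem M N (k + 2) g) (hcf : Cofinal M N g) (h : PSig (k + 1) M) :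
    PSig (k + 1) N := by
  intro f hf hpf b
  obtain ⟨F, S, hFS, e, he⟩ := nfm_ex hN hDN hf
  obtain ⟨c, hc⟩ := hcf e
  obtain ⟨b0, hb0⟩ := hcf b
  have hG : SigmaDef2 (k + 1) M (Gfun S M c) :=
    sigmaDef2_of (T := TC k) hT (α := Fin 1)
      (R := fun X _ w => Gfun S X (w (some (some 0))) (w (some none)) (w none))
      (Df.comp3 hFS.gfun (Tm.var _) (Tm.var _) (Tm.var _)) ![c]
  have hap := h _ hG (Gfun.partialFun hM c) (b0 + b0)
  rw [hM.approx_iff hDM] at hap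
  rw [hN.approx_iff hDN]
  obtain ⟨a, d, hap⟩ := hap
  have h1 := bnd_of_ab hM hDM hap
  have h2 : Bnd S N (g a) (g (d + d)) (g b0) (g c) :=
    (transfer hel hT hTN hFS.bnd (by omega) ![a, d + d, b0, c]).1 h1
  refine ⟨g a, g (d + d), fun i u v x y hi hu hv hx hxy => ?_⟩
  let := hN.order
  obtain ⟨w, hw⟩ := hFS.psi_ex_N hT hTN hI hel x y e ((he x y).1 hxy)
  have h3 := h2 i u v x w e (lt_of_lt_of_le hi hb0) hu hv hx hc hw
  obtain ⟨w', -, -, y', hy', z, -, hS⟩ := hw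
  have h4 : f x y' := (he x y').2 ((hFS.hFS N hTN x y' e).2 ⟨z, hS⟩)
  rw [hpf x y y' hxy h4]
  exact le_trans hy'.le h3

end Up

/-- For `n ≥ 1`, if `M ⊨ PA⁻ + IΣn` and `N` is a Σ_{n+1}-elementary
cofinal extension of `M`, then `M ⊨ PΣn` iff `N ⊨ PΣn`. -/
theorem statement_19 (n : ℕ) (hn : 1 ≤ n) (M N : Type)
    [lang.Structure M] [lang.Structure N]
    (hPA : PAm M) (hI : ISig n M)
    (g : M → N) (hel : SigmaElem M N (n + 1) g) (hcf : Cofinal M N g) :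
    PSig n M ↔ PSig n N := by
  obtain ⟨k, rfl⟩ : ∃ k, n = k + 1 := ⟨n - 1, by omega⟩
  have hPN : PAm N := hPA.transfer hn hel
  have hDM : Div M := Div.of_ind hn hPA hI
  have hDN : Div N := hDM.transfer hn hel
  have hTM : TC k M := tc_M hPA hI k (by omega)
  have hTN : TC k N := tc_N hPA hI hPN hel k le_rfl
  exact ⟨psig_up hPA hDM hPN hDN hI hTM hTN hel hcf, psig_down hPA hDM hPN hDN hel⟩

end ArithFC
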